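/- arXiv:2303.03980 — 2 statements merged into one kernel-verified Lean document; each statement's English description precedes it below -/
import Mathlib

section
/- Let V be a leafless unrooted directed tree and μ=(μ_v)_{v∈V} a weight of nonzero scalars. Let 1<p<∞ and suppose the unweighted backward shift B is an operator on ℓ^p(V,μ). Then B is chaotic on ℓ^p(V,μ) if and only if for every v∈V: c_p(V(v),μ)<∞, and for every ε>0 there is some N≥1 such that c_p(V_-^N(v),μ)<ε. -/
open scoped ENNReal NNReal Topology Classical
open Filter

namespace PaperTree

/-! ### Directed trees -/

variable {V : Type*}

/-- Iterated parent map of a directed tree given by a parent function. -/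
def parIter (par : V → Option V) : ℕ → V → Option V
  | 0, v => some v
  | n + 1, v => (par v).bind (parIter par n)

/-- `par` is the parent function of a (countable, connected, acyclic) directed tree on `V`,
in which every vertex has at most one parent and at most one vertex (the root) has none. -/
structure IsDirectedTree (par : V → Option V) : Prop where
  countable : Countable V
  acyclic : ∀ (v : V) (n : ℕ), 0 < n → parIter par n v ≠ some v
  connected : ∀ u v : V, ∃ (m n : ℕ) (w : V), parIter par m u = some w ∧ parIter par n v = some w
  root_unique : ∀ u v : V, par u = none → par v = none → u = v

/-- The set of children of `v`. -/
def children (par : V → Option V) (v : V) : Set V := {u : V | par u = some v}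

/-- The set of descendants of `v` (including `v`); the rooted subtree `V(v)`. -/
def descendants (par : V → Option V) (v : V) : Set V := {u : V | ∃ n : ℕ, parIter par n u = some v}

def IsLeafV (par : V → Option V) (v : V) : Prop := children par v = ∅

def Leafless (par : V → Option V) : Prop := ∀ v : V, children par v ≠ ∅

def IsRoot (par : V → Option V) (v : V) : Prop := par v = none

def Rooted (par : V → Option V) : Prop := ∃ v : V, IsRoot par v

def Unrooted (par : V → Option V) : Prop := ∀ v : V, par v ≠ none

/-- The tree has a free left end: some vertex all of whose (proper) ancestors
have exactly one child. -/
def HasFreeLeftEnd (par : V → Option V) : Prop :=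
  ∃ v : V, ∀ n : ℕ, 1 ≤ n → ∀ w : V, parIter par n v = some w → ∃! u : V, u ∈ children par w

/-- The tree has finite length (all branches have uniformly bounded length). -/
def FiniteLength (par : V → Option V) : Prop := ∃ m : ℕ, ∀ u : V, parIter par (m + 1) u = none

/-- Product of the weights along the upward path of length `n` ending at `u`;
for `u ∈ Chi^n(v)` this is `λ(v → u)`, and `pathProd par lam n v = λ(par^n(v) → v)`. -/
def pathProd {𝕜 : Type*} [Monoid 𝕜] (par : V → Option V) (lam : V → 𝕜) : ℕ → V → 𝕜
  | 0, _ => 1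
  | n + 1, u => lam u * ((par u).elim 1 (pathProd par lam n))

/-- A (finite or infinite, maximal) branch starting at `v`, encoded with `Option`. -/
def IsOptBranch (par : V → Option V) (v : V) (b : ℕ → Option V) : Prop :=
  b 0 = some v ∧
  (∀ (k : ℕ) (w : V), b k = some w →
      (children par w = ∅ ∧ b (k + 1) = none) ∨ ∃ u ∈ children par w, b (k + 1) = some u) ∧
  ∀ k : ℕ, b k = none → b (k + 1) = none

/-- An infinite branch starting at `v` (adequate for leafless trees). -/
def IsBranch (par : V → Option V) (v : V) (b : ℕ → V) : Prop :=
  b 0 = v ∧ ∀ k : ℕ, b (k + 1) ∈ children par (b k)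

/-- The `[0,∞]`-valued absolute weight associated with a scalar weight. -/
noncomputable def nw {𝕜 : Type*} [RCLike 𝕜] (μ : V → 𝕜) : V → ℝ≥0∞ := fun v => (‖μ v‖₊ : ℝ≥0∞)

/-! ### Linear dynamics -/

section Dynamics

variable {𝕜 : Type*} [RCLike 𝕜] {X : Type*} [AddCommGroup X] [Module 𝕜 X] [TopologicalSpace X]

/-- An operator is hypercyclic if some vector has dense orbit. -/
def Hypercyclic (T : X →L[𝕜] X) : Prop :=
  ∃ x : X, Dense (Set.range fun n : ℕ => (T ^ n) x)

/-- A periodic point of the operator `T`. -/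
def IsPeriodicPoint (T : X →L[𝕜] X) (x : X) : Prop :=
  ∃ N : ℕ, 1 ≤ N ∧ (T ^ N) x = x

/-- An operator is chaotic if it is hypercyclic and has a dense set of periodic points. -/
def ChaoticOp (T : X →L[𝕜] X) : Prop :=
  Hypercyclic T ∧ Dense {x : X | IsPeriodicPoint T x}

/-- Topological mixing. -/
def MixingOp (T : X →L[𝕜] X) : Prop :=
  ∀ U₁ U₂ : Set X, IsOpen U₁ → IsOpen U₂ → U₁.Nonempty → U₂.Nonempty →
    ∃ m : ℕ, ∀ n : ℕ, m ≤ n → ((⇑(T ^ n)) '' U₁ ∩ U₂).Nonempty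

/-- Weak mixing: `T ⊕ T` is hypercyclic on `X × X`. -/
def WeaklyMixingOp (T : X →L[𝕜] X) : Prop :=
  Hypercyclic (T.prodMap T)

variable {V : Type*}

/-- `T` is (a representation via the coefficient embedding `ι` of) the weighted backward
shift `B_λ` as an operator on `X`: for every `x ∈ X` and every vertex `v` the defining
series converges unconditionally to the `v`-th coefficient of `T x`. -/
def IsShiftRep (par : V → Option V) (lam : V → 𝕜) (ι : X →ₗ[𝕜] V → 𝕜) (T : X →L[𝕜] X) : Prop :=
  ∀ (x : X) (v : V), HasSum (fun u : ↥(children par v) => lam u.1 * ι x u.1) (ι (T x) v)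

end Dynamics

/-! ### The generalized continued fractions `c_p` and resistances `r_p` -/

section Constants

/-- Conjugate exponent. -/
noncomputable def conjExp (p : ℝ) : ℝ := p / (p - 1)

variable {V : Type*}

/-- `cpAux chi w p m v` is the continued fraction `c_p` of the subtree of descendants of `v`
(with respect to the children map `chi`) truncated at depth `m`, with weight `w`. -/
noncomputable def cpAux (chi : V → Set V) (w : V → ℝ≥0∞) (p : ℝ) : ℕ → V → ℝ≥0∞
  | 0, _ => 0
  | m + 1, v =>
      if chi v = ∅ then 0
      else (∑' u : ↥(chi v),
              (w u.1 ^ p + cpAux chi w p m u.1 ^ p) ^ (-(conjExp p / p))) ^ (-(1 / conjExp p))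

/-- The continued fraction `c_p(V(v), w)` of order `1 < p < ∞`. -/
noncomputable def cpC (chi : V → Set V) (w : V → ℝ≥0∞) (p : ℝ) (v : V) : ℝ≥0∞ :=
  ⨆ m : ℕ, cpAux chi w p m v

/-- The resistance `r_p(V(v), w)` of order `1 < p < ∞`. -/
noncomputable def rpC (chi : V → Set V) (w : V → ℝ≥0∞) (p : ℝ) (v : V) : ℝ≥0∞ :=
  (w v ^ p + cpC chi w p v ^ p) ^ (1 / p)

/-- Truncated continued fraction of order `p = ∞`. -/
noncomputable def cInfAux (chi : V → Set V) (w : V → ℝ≥0∞) : ℕ → V → ℝ≥0∞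
  | 0, _ => 0
  | m + 1, v =>
      if chi v = ∅ then 0
      else (∑' u : ↥(chi v), (max (w u.1) (cInfAux chi w m u.1))⁻¹)⁻¹

/-- The continued fraction `c_∞(V(v), w)`. -/
noncomputable def cInfC (chi : V → Set V) (w : V → ℝ≥0∞) (v : V) : ℝ≥0∞ :=
  ⨆ m : ℕ, cInfAux chi w m v

/-- The resistance `r_∞(V(v), w)`. -/
noncomputable def rInfC (chi : V → Set V) (w : V → ℝ≥0∞) (v : V) : ℝ≥0∞ :=
  max (w v) (cInfC chi w v)

end Constants

/-! ### Concrete sequence spaces `ℓ^p(V, μ)` and `c₀(V, μ)`, up to isometry -/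

section SpaceRep

variable {𝕜 : Type*} [RCLike 𝕜] {V : Type*} {X : Type*} [NormedAddCommGroup X] [NormedSpace 𝕜 X]

/-- `X` is (an isometric copy of) the weighted space `ℓ^p(V, μ)`, the identification being
given by the coefficient embedding `ι`. -/
def IsLpSpaceRep (ι : X →ₗ[𝕜] V → 𝕜) (μ : V → 𝕜) (p : ℝ) : Prop :=
  Function.Injective ι ∧
  (∀ f : V → 𝕜, (∑' v : V, (‖f v * μ v‖₊ : ℝ≥0∞) ^ p) < ⊤ ↔ f ∈ Set.range ι) ∧
  ∀ x : X, (‖x‖₊ : ℝ≥0∞) = (∑' v : V, (‖ι x v * μ v‖₊ : ℝ≥0∞) ^ p) ^ (1 / p)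

/-- `X` is (an isometric copy of) the weighted space `c₀(V, μ)`. -/
def IsC0SpaceRep (ι : X →ₗ[𝕜] V → 𝕜) (μ : V → 𝕜) : Prop :=
  Function.Injective ι ∧
  (∀ f : V → 𝕜, (∀ ε : ℝ, 0 < ε → {v : V | ε ≤ ‖f v * μ v‖}.Finite) ↔ f ∈ Set.range ι) ∧
  ∀ x : X, (‖x‖₊ : ℝ≥0∞) = ⨆ v : V, (‖ι x v * μ v‖₊ : ℝ≥0∞)

end SpaceRep

/-! ### The rooted trees `V_-^N(v)` associated with a vertex of an unrooted tree -/

section Minus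

variable {V : Type*}

/-- The generation of index `n ∈ ℤ` relative to the vertex `v` (which lies in generation `0`). -/
def relGen (par : V → Option V) (v : V) (n : ℤ) : Set V :=
  {w : V | ∃ j k : ℕ, (j : ℤ) - (k : ℤ) = n ∧
      ∃ a : V, parIter par k v = some a ∧ parIter par j w = some a}

/-- The spine through `v`: the vertices `par^{nN}(v)`, `n ≥ 0`. -/
def spine (par : V → Option V) (v : V) (N : ℕ) (w : V) : Prop :=
  ∃ n : ℕ, parIter par (n * N) v = some w

/-- The modified children map of the rooted tree `V_-^N(v)` (with root `v`). -/
def childrenMinus (par : V → Option V) (v : V) (N : ℕ) (w : V) : Set V :=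
  {u : V |
    (¬ spine par v N w ∧ parIter par N u = some w) ∨
    ∃ n : ℕ, parIter par (n * N) v = some w ∧
      (parIter par ((n + 1) * N) v = some u ∨
        ∃ a : V, parIter par ((n + 1) * N) v = some a ∧ parIter par N u = some a ∧ u ≠ w)}

/-- The vertex set of the rooted tree `V_-^N(v)`: all vertices in generations that are
multiples of `N` (relative to `v`), minus the proper descendants of `v` of such degrees. -/
def VminusN (par : V → Option V) (v : V) (N : ℕ) : Set V :=
  {w : V | (∃ n : ℤ, w ∈ relGen par v (n * (N : ℤ))) ∧
    ∀ n : ℕ, 1 ≤ n → parIter par (n * N) w ≠ some v}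

end Minus

/-! ### Auxiliary: generic flow estimates -/

lemma conjExp_holder {p : ℝ} (hp : 1 < p) : p.HolderConjugate (conjExp p) := by
  have := Real.HolderConjugate.conjExponent hp
  simpa [conjExp, Real.conjExponent] using this

lemma tsum_holder {α : Type*} {p q : ℝ} (h : p.HolderConjugate q) (f g : α → ℝ≥0∞) :
    ∑' i, f i * g i ≤ (∑' i, f i ^ p) ^ (1 / p) * (∑' i, g i ^ q) ^ (1 / q) := by
  rw [ENNReal.tsum_eq_iSup_sum]
  refine iSup_le fun s => (ENNReal.inner_le_Lp_mul_Lq s f g h).trans ?_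
  have hp := h.pos
  have hq := h.symm.pos
  gcongr
  · exact ENNReal.sum_le_tsum s
  · exact ENNReal.sum_le_tsum s

lemma cpAux_succ {V : Type*} {chi : V → Set V} (w : V → ℝ≥0∞) (p : ℝ) (m : ℕ) (v : V)
    (hne : chi v ≠ ∅) :
    cpAux chi w p (m + 1) v = (∑' u : ↥(chi v),
      (w u.1 ^ p + cpAux chi w p m u.1 ^ p) ^ (-(conjExp p / p))) ^ (-(1 / conjExp p)) := by
  simp [cpAux, hne]

lemma cpAux_ne_top {V : Type*} {chi : V → Set V} {w : V → ℝ≥0∞} {p : ℝ} (hp : 1 < p)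
    (hw : ∀ v, w v ≠ ⊤) (m : ℕ) : ∀ v, cpAux chi w p m v ≠ ⊤ := by
  have hc := conjExp_holder hp
  have hq := hc.symm.pos
  have hp0 := hc.pos
  induction m with
  | zero => intro v; simp [cpAux]
  | succ m ih =>
    intro v
    by_cases hne : chi v = ∅
    · simp [cpAux, hne]
    rw [cpAux_succ _ _ _ _ hne]
    obtain ⟨u, hu⟩ := Set.nonempty_iff_ne_empty.2 hne
    rw [ENNReal.rpow_neg]
    refine ENNReal.inv_ne_top.2 ?_
    have h1 : (w u ^ p + cpAux chi w p m u ^ p) ^ (-(conjExp p / p)) ≠ 0 := by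
      rw [ENNReal.rpow_neg]
      refine ENNReal.inv_ne_zero.2 ?_
      refine ENNReal.rpow_ne_top_of_nonneg (by positivity) ?_
      exact ENNReal.add_ne_top.2 ⟨ENNReal.rpow_ne_top_of_nonneg hp0.le (hw _),
        ENNReal.rpow_ne_top_of_nonneg hp0.le (ih _)⟩
    have h2 := ENNReal.le_tsum (f := fun u : ↥(chi v) =>
      (w u.1 ^ p + cpAux chi w p m u.1 ^ p) ^ (-(conjExp p / p))) ⟨u, hu⟩
    intro h3
    rw [ENNReal.rpow_eq_zero_iff_of_pos (by positivity)] at h3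
    rw [h3] at h2
    exact h1 (le_antisymm h2 bot_le)

lemma cpAux_mono {V : Type*} {chi : V → Set V} {w : V → ℝ≥0∞} {p : ℝ} (hp : 1 < p)
    (m : ℕ) : ∀ v, cpAux chi w p m v ≤ cpAux chi w p (m + 1) v := by
  have hc := conjExp_holder hp
  have hq := hc.symm.pos
  have hp0 := hc.pos
  induction m with
  | zero => intro v; simp [cpAux]
  | succ m ih =>
    intro v
    by_cases hne : chi v = ∅
    · simp [cpAux, hne]
    rw [cpAux_succ _ _ _ _ hne, cpAux_succ _ _ _ _ hne, ENNReal.rpow_neg, ENNReal.rpow_neg]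
    refine ENNReal.inv_le_inv.2 ?_
    refine ENNReal.rpow_le_rpow ?_ (by positivity)
    refine ENNReal.tsum_le_tsum fun u => ?_
    rw [ENNReal.rpow_neg, ENNReal.rpow_neg]
    refine ENNReal.inv_le_inv.2 ?_
    have := ih u.1
    gcongr

lemma parIter_succ' {V : Type*} (q : V → Option V) (n : ℕ) :
    ∀ v, parIter q (n + 1) v = (parIter q n v).bind q := by
  induction n with
  | zero => intro v; cases h : q v <;> simp [parIter, h]
  | succ n ih =>
    intro v
    rw [parIter]
    cases h : q v with
    | none => simp [parIter, h]
    | some a => simp only [Option.bind_some]; rw [ih a]; simp [parIter, h]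

lemma parIter_add {V : Type*} (q : V → Option V) (m n : ℕ) :
    ∀ v, parIter q (m + n) v = (parIter q m v).bind (parIter q n) := by
  induction m with
  | zero => intro v; simp [parIter]
  | succ m ih =>
    intro v
    rw [Nat.succ_add, parIter, parIter]
    cases h : q v with
    | none => simp
    | some a => simp [ih a]

lemma parIter_unique {V : Type*} {q : V → Option V} {v : V}
    (hac : ∀ n : ℕ, 0 < n → parIter q n v ≠ some v) {u : V} {m n : ℕ}
    (hm : parIter q m u = some v) (hn : parIter q n u = some v) : m = n := by
  wlog h : m ≤ n generalizing m n
  · exact (this hn hm (by omega)).symm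
  by_contra hne
  obtain ⟨k, rfl⟩ := Nat.exists_eq_add_of_le h
  rw [parIter_add, hm] at hn
  exact hac k (by omega) (by simpa using hn)

/-- Truncated energy. -/
noncomputable def Den {V : Type*} (q : V → Option V) (a : V → ℝ≥0∞) (m : ℕ) (w : V) : ℝ≥0∞ :=
  ∑' u, ∑ k ∈ Finset.range m, if parIter q (k + 1) u = some w then a u else 0

lemma Den_succ {V : Type*} (q : V → Option V) (a : V → ℝ≥0∞) (m : ℕ) (w : V) :
    ∑' x : ↥(children q w), (a x.1 + Den q a m x.1) ≤ Den q a (m + 1) w := by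
  have h1 : ∀ x : ↥(children q w), a x.1 + Den q a m x.1 =
      ∑' u, ∑ k ∈ Finset.range (m+1), if parIter q k u = some x.1 then a u else 0 := by
    intro x
    simp_rw [Finset.sum_range_succ']
    rw [ENNReal.tsum_add, add_comm, Den]
    congr 1
    rw [tsum_eq_single x.1]
    · simp [parIter]
    · intro b hb; simp [parIter, hb]
  simp_rw [h1]
  rw [ENNReal.tsum_comm, Den]
  refine ENNReal.tsum_le_tsum fun u => ?_
  rw [Summable.tsum_finsetSum (fun _ _ => ENNReal.summable)]
  refine Finset.sum_le_sum fun k _ => ?_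
  by_cases h : ∃ x : ↥(children q w), parIter q k u = some x.1
  · obtain ⟨x, hx⟩ := h
    rw [tsum_eq_single x]
    · rw [parIter_succ', hx]
      have : q x.1 = some w := x.2
      simp [this]
    · intro y hy
      rw [hx]
      rw [if_neg]
      intro h
      exact hy (Subtype.ext (Option.some.inj h).symm)
  · push Not at h
    simp [h]

lemma Den_le {V : Type*} {q : V → Option V} {v : V}
    (hac : ∀ n : ℕ, 0 < n → parIter q n v ≠ some v) (a : V → ℝ≥0∞) (m : ℕ) :
    Den q a m v ≤ ∑' u, if u = v then 0 else a u := by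
  refine ENNReal.tsum_le_tsum fun u => ?_
  by_cases h : ∃ k ∈ Finset.range m, parIter q (k + 1) u = some v
  · obtain ⟨k, hk, hku⟩ := h
    rw [Finset.sum_eq_single_of_mem k hk]
    · rw [if_pos hku, if_neg]
      rintro rfl
      exact hac _ (by omega) hku
    · intro j _ hj
      rw [if_neg]
      intro h
      exact hj (by have := parIter_unique hac hku h; omega)
  · push Not at h
    rw [Finset.sum_eq_zero]
    · exact bot_le
    · intro k hk; rw [if_neg (h k hk)]

lemma cp_upper_aux {V : Type*} {q : V → Option V} {w : V → ℝ≥0∞} {p : ℝ} (hp : 1 < p)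
    (hw0 : ∀ v, w v ≠ 0) (hw : ∀ v, w v ≠ ⊤) (f : V → ℝ≥0∞)
    (hf : ∀ x, f x ≤ ∑' u : ↥(children q x), f u.1) (m : ℕ) :
    ∀ x, cpAux (children q) w p m x ^ p * f x ^ p ≤ Den q (fun u => (f u * w u) ^ p) m x := by
  have hc := conjExp_holder hp
  have hq := hc.symm.pos
  have hp0 := hc.pos
  induction m with
  | zero => intro x; simp [cpAux, hp0]
  | succ m ih =>
    intro x
    by_cases hne : children q x = ∅
    · simp [cpAux, hne, hp0]
    refine le_trans ?_ (Den_succ _ _ _ _)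
    set r : V → ℝ≥0∞ := fun u => (w u ^ p + cpAux (children q) w p m u ^ p) ^ (1 / p) with hr
    have hr0 : ∀ u, r u ≠ 0 := by
      intro u h
      rw [hr] at h
      simp only at h
      rw [ENNReal.rpow_eq_zero_iff_of_pos (by positivity), add_eq_zero,
        ENNReal.rpow_eq_zero_iff_of_pos hp0] at h
      exact hw0 u h.1
    have hrt : ∀ u, r u ≠ ⊤ := by
      intro u
      refine ENNReal.rpow_ne_top_of_nonneg (by positivity) ?_
      exact ENNReal.add_ne_top.2 ⟨ENNReal.rpow_ne_top_of_nonneg hp0.le (hw _),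
        ENNReal.rpow_ne_top_of_nonneg hp0.le (cpAux_ne_top hp hw _ _)⟩
    have hrp : ∀ u, r u ^ p = w u ^ p + cpAux (children q) w p m u ^ p := by
      intro u
      rw [hr]; simp only
      rw [← ENNReal.rpow_mul, one_div_mul_cancel hp0.ne', ENNReal.rpow_one]
    have hcs : cpAux (children q) w p (m+1) x =
        ((∑' u : ↥(children q x), ((r u.1)⁻¹) ^ (conjExp p)) ^ (1 / conjExp p))⁻¹ := by
      rw [cpAux_succ _ _ _ _ hne, ENNReal.rpow_neg]
      congr 3
      ext u
      rw [hr]; simp only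
      rw [ENNReal.inv_rpow, ← ENNReal.rpow_mul, ENNReal.rpow_neg]
      congr 2
      field_simp
    have hfx : f x ≤ (∑' u : ↥(children q x), (f u.1 * r u.1) ^ p) ^ (1 / p) *
        (∑' u : ↥(children q x), ((r u.1)⁻¹) ^ (conjExp p)) ^ (1 / conjExp p) := by
      refine (hf x).trans (le_trans (le_of_eq ?_) (tsum_holder hc _ _))
      refine tsum_congr fun u => ?_
      rw [mul_assoc, ENNReal.mul_inv_cancel (hr0 _) (hrt _), mul_one]
    have h2 : cpAux (children q) w p (m+1) x * f x ≤
        (∑' u : ↥(children q x), (f u.1 * r u.1) ^ p) ^ (1 / p) := by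
      rw [hcs]
      set Z := (∑' u : ↥(children q x), ((r u.1)⁻¹) ^ (conjExp p)) ^ (1 / conjExp p)
      set Y := (∑' u : ↥(children q x), (f u.1 * r u.1) ^ p) ^ (1 / p)
      calc Z⁻¹ * f x ≤ Z⁻¹ * (Y * Z) := by gcongr
        _ = Y * (Z * Z⁻¹) := by ring
        _ ≤ Y * 1 := by gcongr; exact ENNReal.mul_inv_le_one Z
        _ = Y := mul_one _
    rw [← ENNReal.mul_rpow_of_nonneg _ _ hp0.le]
    calc _ ≤ ((∑' u : ↥(children q x), (f u.1 * r u.1) ^ p) ^ (1 / p)) ^ p := by gcongr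
      _ = ∑' u : ↥(children q x), (f u.1 * r u.1) ^ p := by
        rw [← ENNReal.rpow_mul, one_div_mul_cancel hp0.ne', ENNReal.rpow_one]
      _ ≤ _ := by
        refine ENNReal.tsum_le_tsum fun u => ?_
        rw [ENNReal.mul_rpow_of_nonneg _ _ hp0.le, hrp, mul_add,
          ENNReal.mul_rpow_of_nonneg _ _ hp0.le]
        gcongr
        rw [mul_comm]
        simpa [ENNReal.mul_rpow_of_nonneg _ _ hp0.le] using ih u.1

lemma cp_upper {V : Type*} {q : V → Option V} {w : V → ℝ≥0∞} {p : ℝ} (hp : 1 < p)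
    (hw0 : ∀ v, w v ≠ 0) (hw : ∀ v, w v ≠ ⊤) (f : V → ℝ≥0∞)
    (hf : ∀ x, f x ≤ ∑' u : ↥(children q x), f u.1) (v : V)
    (hac : ∀ n : ℕ, 0 < n → parIter q n v ≠ some v) :
    cpC (children q) w p v * f v ≤ (∑' u, if u = v then 0 else (f u * w u) ^ p) ^ (1 / p) := by
  have hp0 : 0 < p := by linarith
  rw [cpC, ENNReal.iSup_mul]
  refine iSup_le fun m => ?_
  have h := (cp_upper_aux hp hw0 hw f hf m v).trans (Den_le hac _ m)
  rw [← ENNReal.mul_rpow_of_nonneg _ _ hp0.le] at h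
  rw [one_div]
  exact (ENNReal.le_rpow_inv_iff hp0).2 h

lemma rpow_iSup' {ι : Type*} {a : ℝ} (ha : 0 < a) (f : ι → ℝ≥0∞) :
    (⨆ i, f i) ^ a = ⨆ i, f i ^ a :=
  (ENNReal.orderIsoRpow a ha).map_iSup f

lemma rpow_iInf' {ι : Type*} {a : ℝ} (ha : 0 < a) (f : ι → ℝ≥0∞) :
    (⨅ i, f i) ^ a = ⨅ i, f i ^ a :=
  (ENNReal.orderIsoRpow a ha).map_iInf f

lemma tsum_iInf' {α : Type*} (f : ℕ → α → ℝ≥0∞) (hf : Antitone f) (h0 : ∑' a, f 0 a ≠ ⊤) :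
    ∑' a, ⨅ n, f n a = ⨅ n, ∑' a, f n a := by
  let _ : MeasurableSpace α := ⊤
  have := MeasureTheory.lintegral_iInf (μ := MeasureTheory.Measure.count) (f := f)
    (fun n => measurable_from_top) hf (by rwa [MeasureTheory.lintegral_count])
  simpa only [MeasureTheory.lintegral_count] using this

/-- the resistance to the power `-p*`. -/
noncomputable def rq {V : Type*} (chi : V → Set V) (w : V → ℝ≥0∞) (p : ℝ) (u : V) : ℝ≥0∞ :=
  (w u ^ p + cpC chi w p u ^ p) ^ (-(conjExp p / p))

lemma cpC_eq {V : Type*} {chi : V → Set V} {w : V → ℝ≥0∞} {p : ℝ} (hp : 1 < p) (v : V)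
    (hne : chi v ≠ ∅) (hsum : ∑' u : ↥(chi v), w u.1 ^ (-conjExp p) ≠ ⊤) :
    cpC chi w p v = (∑' u : ↥(chi v), rq chi w p u.1) ^ (-(1 / conjExp p)) := by
  have hc := conjExp_holder hp
  have hq := hc.symm.pos
  have hp0 := hc.pos
  have hmono : ∀ u, Monotone fun m => cpAux chi w p m u :=
    fun u => monotone_nat_of_le_succ fun m => cpAux_mono hp m u
  have h1 : cpC chi w p v = ⨆ m, cpAux chi w p (m+1) v := by
    rw [cpC]
    exact ((hmono v).iSup_nat_add 1).symm
  rw [h1]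
  simp_rw [cpAux_succ _ _ _ _ hne, ENNReal.rpow_neg _ (1 / conjExp p)]
  rw [← ENNReal.inv_iInf, ← rpow_iInf' (by positivity), ← tsum_iInf']
  · congr 3
    ext u
    rw [rq, cpC]
    simp_rw [ENNReal.rpow_neg]
    rw [← ENNReal.inv_iSup, ← rpow_iSup' (by positivity), rpow_iSup' hp0, ENNReal.add_iSup]
  · intro m n hmn u
    simp only [ENNReal.rpow_neg]
    have := hmono u.1 hmn
    simp only at this
    refine ENNReal.inv_le_inv.2 ?_
    gcongr
  · convert hsum using 3 with u
    simp only [cpAux]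
    rw [ENNReal.zero_rpow_of_pos hp0, add_zero, ← ENNReal.rpow_mul]
    congr 1
    field_simp

/-- transition kernel -/
noncomputable def tk {V : Type*} (q : V → Option V) (w : V → ℝ≥0∞) (p : ℝ) (x u : V) : ℝ≥0∞ :=
  rq (children q) w p u * (∑' y : ↥(children q x), rq (children q) w p y.1)⁻¹

/-- flow at level k -/
noncomputable def Hk {V : Type*} (q : V → Option V) (w : V → ℝ≥0∞) (p : ℝ) (v : V) :
    ℕ → V → ℝ≥0∞
  | 0, u => if u = v then 1 else 0
  | k + 1, u => (q u).elim 0 (fun x => Hk q w p v k x * tk q w p x u)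

lemma Hk_ne_zero {V : Type*} {q : V → Option V} {w : V → ℝ≥0∞} {p : ℝ} {v : V} (k : ℕ) :
    ∀ u, Hk q w p v k u ≠ 0 → parIter q k u = some v := by
  induction k with
  | zero => intro u h; simp [Hk] at h; simp [parIter, h]
  | succ k ih =>
    intro u h
    rw [parIter]
    rw [Hk] at h
    cases hq : q u with
    | none => simp [hq] at h
    | some x =>
      simp only [hq, Option.elim_some] at h
      simpa using ih x (left_ne_zero_of_mul h)

section flow
variable {V : Type*} {q : V → Option V} {w : V → ℝ≥0∞} {p : ℝ}

lemma rq_eq_zero (hp : 1 < p) {u : V} (h : cpC (children q) w p u = ⊤) :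
    rq (children q) w p u = 0 := by
  have hc := conjExp_holder hp
  have hq := hc.symm.pos
  have hp0 := hc.pos
  rw [rq, h, ENNReal.top_rpow_of_pos hp0, add_top, ENNReal.top_rpow_of_neg]
  have : 0 < conjExp p / p := by positivity
  linarith

lemma Hk_top (hp : 1 < p) {v : V} (hv : cpC (children q) w p v ≠ ⊤) (k : ℕ) (u : V)
    (h : cpC (children q) w p u = ⊤) : Hk q w p v k u = 0 := by
  cases k with
  | zero =>
    rw [Hk, if_neg]
    rintro rfl
    exact hv h
  | succ k =>
    rw [Hk]
    cases hq : q u with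
    | none => simp
    | some x => simp [tk, rq_eq_zero hp h]

lemma rq_sum_ne_top (hp : 1 < p) (x : V)
    (hsum : ∑' u : ↥(children q x), w u.1 ^ (-conjExp p) ≠ ⊤) :
    ∑' u : ↥(children q x), rq (children q) w p u.1 ≠ ⊤ := by
  have hc := conjExp_holder hp
  have hq := hc.symm.pos
  have hp0 := hc.pos
  refine ne_top_of_le_ne_top hsum (ENNReal.tsum_le_tsum fun u => ?_)
  rw [rq, ENNReal.rpow_neg, ENNReal.rpow_neg]
  refine ENNReal.inv_le_inv.2 ?_
  calc w u.1 ^ conjExp p = (w u.1 ^ p) ^ (conjExp p / p) := by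
        rw [← ENNReal.rpow_mul]; congr 1; field_simp
    _ ≤ _ := by gcongr; exact le_self_add

lemma rq_sum_ne_zero (hp : 1 < p) (x : V) (hne : children q x ≠ ∅)
    (hsum : ∑' u : ↥(children q x), w u.1 ^ (-conjExp p) ≠ ⊤)
    (h : cpC (children q) w p x ≠ ⊤) :
    ∑' u : ↥(children q x), rq (children q) w p u.1 ≠ 0 := by
  have hc := conjExp_holder hp
  have hq := hc.symm.pos
  intro h0
  rw [cpC_eq hp x hne hsum, h0, ENNReal.zero_rpow_of_neg] at h
  · exact h rfl
  · have : 0 < 1 / conjExp p := by positivity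
    linarith

lemma tk_sum (hp : 1 < p) (x : V) (hne : children q x ≠ ∅)
    (hsum : ∑' u : ↥(children q x), w u.1 ^ (-conjExp p) ≠ ⊤)
    (h : cpC (children q) w p x ≠ ⊤) :
    ∑' u : ↥(children q x), tk q w p x u.1 = 1 := by
  simp only [tk]
  rw [ENNReal.tsum_mul_right]
  exact ENNReal.mul_inv_cancel (rq_sum_ne_zero hp x hne hsum h) (rq_sum_ne_top hp x hsum)

lemma tk_energy (hp : 1 < p) (hw0 : ∀ v, w v ≠ 0) (x : V) (hne : children q x ≠ ∅)
    (hsum : ∑' u : ↥(children q x), w u.1 ^ (-conjExp p) ≠ ⊤)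
    (h : cpC (children q) w p x ≠ ⊤) :
    ∑' u : ↥(children q x), tk q w p x u.1 ^ p * (w u.1 ^ p + cpC (children q) w p u.1 ^ p)
      = cpC (children q) w p x ^ p := by
  have hc := conjExp_holder hp
  have hq := hc.symm.pos
  have hp0 := hc.pos
  set Z := ∑' u : ↥(children q x), rq (children q) w p u.1 with hZ
  have hZ0 : Z ≠ 0 := rq_sum_ne_zero hp x hne hsum h
  have hZt : Z ≠ ⊤ := rq_sum_ne_top hp x hsum
  have key : ∀ u : ↥(children q x),
      tk q w p x u.1 ^ p * (w u.1 ^ p + cpC (children q) w p u.1 ^ p) =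
      rq (children q) w p u.1 * (Z⁻¹) ^ p := by
    intro u
    rw [tk, ENNReal.mul_rpow_of_nonneg _ _ hp0.le, mul_right_comm, ← hZ]
    congr 1
    by_cases ht : cpC (children q) w p u.1 = ⊤
    · rw [rq_eq_zero hp ht, ENNReal.zero_rpow_of_pos hp0, zero_mul]
    · set R := w u.1 ^ p + cpC (children q) w p u.1 ^ p with hR
      have hR0 : R ≠ 0 := by
        intro h0
        rw [hR, add_eq_zero, ENNReal.rpow_eq_zero_iff_of_pos hp0] at h0
        exact hw0 _ h0.1
      rw [rq, ← hR]
      by_cases hRt : R = ⊤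
      · have : 0 < conjExp p / p := by positivity
        rw [hRt, ENNReal.top_rpow_of_neg (by linarith), ENNReal.zero_rpow_of_pos hp0, zero_mul]
      · rw [← ENNReal.rpow_mul]
        nth_rewrite 2 [← ENNReal.rpow_one R]
        rw [← ENNReal.rpow_add _ _ hR0 hRt]
        congr 1
        have h1 : p - 1 ≠ 0 := by linarith
        rw [conjExp]
        field_simp
        ring
  simp_rw [key]
  rw [ENNReal.tsum_mul_right, ← hZ, cpC_eq hp x hne hsum, ← hZ, ← ENNReal.rpow_mul,
    ENNReal.inv_rpow, ← ENNReal.rpow_neg]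
  nth_rewrite 1 [← ENNReal.rpow_one Z]
  rw [← ENNReal.rpow_add _ _ hZ0 hZt]
  congr 1
  have h1 : p - 1 ≠ 0 := by linarith
  rw [conjExp]
  field_simp
  ring

lemma tsum_children (F : V → ℝ≥0∞) (hF : ∀ u, q u = none → F u = 0) :
    ∑' u, F u = ∑' x, ∑' u : ↥(children q x), F u.1 := by
  simp_rw [tsum_subtype]
  rw [ENNReal.tsum_comm]
  refine tsum_congr fun u => ?_
  cases hq : q u with
  | none =>
    rw [hF u hq]
    symm
    simp [Set.indicator, hF u hq]
  | some x =>
    rw [tsum_eq_single x]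
    · rw [Set.indicator_of_mem]; exact hq
    · intro y hy
      rw [Set.indicator_of_notMem]
      intro h
      have : q u = some y := h
      rw [hq] at this
      exact hy (Option.some.inj this).symm

lemma Hk_step (hp : 1 < p) (hw0 : ∀ v, w v ≠ 0) (hne : ∀ x, children q x ≠ ∅)
    (hsum : ∀ x, ∑' u : ↥(children q x), w u.1 ^ (-conjExp p) ≠ ⊤) {v : V}
    (hv : cpC (children q) w p v ≠ ⊤) (k : ℕ) :
    ∑' u, Hk q w p v (k+1) u ^ p * (w u ^ p + cpC (children q) w p u ^ p) =
    ∑' u, Hk q w p v k u ^ p * cpC (children q) w p u ^ p := by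
  have hp0 : 0 < p := by linarith
  rw [tsum_children (q := q)]
  · refine tsum_congr fun x => ?_
    by_cases hx : cpC (children q) w p x = ⊤
    · have h0 := Hk_top hp hv k x hx
      rw [h0, ENNReal.zero_rpow_of_pos hp0, zero_mul, ENNReal.tsum_eq_zero]
      intro u
      have : q u.1 = some x := u.2
      simp [Hk, this, h0, hp0]
    · rw [← tk_energy hp hw0 x (hne x) (hsum x) hx, ← ENNReal.tsum_mul_left]
      refine tsum_congr fun u => ?_
      have : q u.1 = some x := u.2
      simp only [Hk, this, Option.elim_some]
      rw [ENNReal.mul_rpow_of_nonneg _ _ hp0.le, mul_assoc]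
  · intro u hu
    simp [Hk, hu, hp0]

lemma Hk_energy (hp : 1 < p) (hw0 : ∀ v, w v ≠ 0) (hne : ∀ x, children q x ≠ ∅)
    (hsum : ∀ x, ∑' u : ↥(children q x), w u.1 ^ (-conjExp p) ≠ ⊤) {v : V}
    (hv : cpC (children q) w p v ≠ ⊤) (K : ℕ) :
    ∑ k ∈ Finset.range K, ∑' u, (Hk q w p v (k+1) u * w u) ^ p +
     ∑' u, Hk q w p v K u ^ p * cpC (children q) w p u ^ p = cpC (children q) w p v ^ p := by
  have hp0 : 0 < p := by linarith
  induction K with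
  | zero =>
    simp only [Finset.range_zero, Finset.sum_empty, zero_add]
    rw [tsum_eq_single v]
    · simp [Hk]
    · intro u hu; simp [Hk, hu, hp0]
  | succ K ih =>
    rw [Finset.sum_range_succ, ← ih, add_assoc, ← Hk_step hp hw0 hne hsum hv K, ← ENNReal.tsum_add]
    congr 1
    refine tsum_congr fun u => ?_
    rw [ENNReal.mul_rpow_of_nonneg _ _ hp0.le, mul_add]

lemma exists_flow (hp : 1 < p) (hw0 : ∀ v, w v ≠ 0) (hne : ∀ x, children q x ≠ ∅)
    (hsum : ∀ x, ∑' u : ↥(children q x), w u.1 ^ (-conjExp p) ≠ ⊤) {v : V}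
    (hv : cpC (children q) w p v ≠ ⊤)
    (hac : ∀ n : ℕ, 0 < n → parIter q n v ≠ some v) :
    ∃ h : V → ℝ≥0∞, h v = 1 ∧ (∀ u, h u ≠ ⊤) ∧
      (∀ u, h u ≠ 0 → ∃ k, parIter q k u = some v) ∧
      (∀ x, ∑' u : ↥(children q x), h u.1 = h x + if q v = some x then 1 else 0) ∧
      (∑' u, if u = v then 0 else (h u * w u) ^ p) ≤ cpC (children q) w p v ^ p := by
  have hp0 : 0 < p := by linarith
  have hone : ∀ u k, Hk q w p v k u ≠ 0 → ∀ j, j ≠ k → Hk q w p v j u = 0 := by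
    intro u k hk j hj
    by_contra h
    exact hj (parIter_unique hac (Hk_ne_zero _ _ h) (Hk_ne_zero _ _ hk))
  have hen : (∑' u, if u = v then 0 else ((∑' k, Hk q w p v k u) * w u) ^ p) ≤
      cpC (children q) w p v ^ p := by
    calc _ ≤ ∑' u, ∑' k, (Hk q w p v (k+1) u * w u) ^ p := by
          refine ENNReal.tsum_le_tsum fun u => ?_
          split_ifs with h
          · exact bot_le
          by_cases hk : ∃ k, Hk q w p v k u ≠ 0
          · obtain ⟨k, hk⟩ := hk
            rw [tsum_eq_single k (hone u k hk)]
            cases k with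
            | zero => simp [Hk, h] at hk
            | succ k => exact ENNReal.le_tsum (f := fun k => (Hk q w p v (k+1) u * w u) ^ p) k
          · push Not at hk
            simp [hk, hp0]
      _ = ∑' k, ∑' u, (Hk q w p v (k+1) u * w u) ^ p := ENNReal.tsum_comm
      _ ≤ _ := by
          rw [ENNReal.tsum_eq_iSup_nat]
          refine iSup_le fun K => ?_
          rw [← Hk_energy hp hw0 hne hsum hv K]
          exact le_self_add
  have hv1 : ∑' k, Hk q w p v k v = 1 := by
    rw [tsum_eq_single 0 (hone v 0 (by simp [Hk]))]
    simp [Hk]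
  refine ⟨fun u => ∑' k, Hk q w p v k u, hv1, ?_, ?_, ?_, hen⟩
  · intro u
    beta_reduce
    by_cases h : u = v
    · subst h; rw [hv1]; exact ENNReal.one_ne_top
    · have h1 := ENNReal.le_tsum
        (f := fun u => if u = v then 0 else ((∑' k, Hk q w p v k u) * w u) ^ p) u
      simp only [if_neg h] at h1
      have h2 := ne_top_of_le_ne_top (ENNReal.rpow_ne_top_of_nonneg hp0.le hv) (h1.trans hen)
      intro h3
      rw [h3, ENNReal.top_mul (hw0 u), ENNReal.top_rpow_of_pos hp0] at h2
      exact h2 rfl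
  · intro u hu
    simp only [ne_eq, ENNReal.tsum_eq_zero, not_forall] at hu
    obtain ⟨k, hk⟩ := hu
    exact ⟨k, Hk_ne_zero k u hk⟩
  · intro x
    rw [ENNReal.tsum_comm, tsum_eq_zero_add' ENNReal.summable, add_comm]
    congr 1
    · refine tsum_congr fun k => ?_
      have h1 : ∀ u : ↥(children q x), Hk q w p v (k+1) u.1 = Hk q w p v k x * tk q w p x u.1 := by
        intro u
        have : q u.1 = some x := u.2
        simp [Hk, this]
      simp_rw [h1]
      rw [ENNReal.tsum_mul_left]
      by_cases hx : cpC (children q) w p x = ⊤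
      · rw [Hk_top hp hv k x hx, zero_mul]
      · rw [tk_sum hp x (hne x) (hsum x) hx, mul_one]
    · split_ifs with h
      · rw [tsum_eq_single ⟨v, h⟩]
        · simp [Hk]
        · intro u hu
          rw [Hk, if_neg]
          intro h2; exact hu (Subtype.ext h2)
      · rw [ENNReal.tsum_eq_zero]
        intro u
        rw [Hk, if_neg]
        intro h2
        apply h
        have : q u.1 = some x := u.2
        rwa [h2] at this

end flow

/-! ### Auxiliary: dynamics -/

section dyn
variable {𝕜 : Type*} [RCLike 𝕜] {X : Type*} [NormedAddCommGroup X] [NormedSpace 𝕜 X]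

def PA (T : X →L[𝕜] X) (x : X) : Prop :=
  ∀ ε : ℝ, 0 < ε → ∃ N : ℕ, 1 ≤ N ∧ ∀ n : ℕ, 1 ≤ n → N ∣ n → ∃ S : X, ‖S‖ < ε ∧ (T ^ n) (x + S) = S

def PB (T : X →L[𝕜] X) (x : X) : Prop :=
  ∀ ε : ℝ, 0 < ε → ∃ n0 : ℕ, ∀ n : ℕ, n0 ≤ n → ∃ Q : X, ‖Q‖ < ε ∧ (T ^ n) Q = x + Q

lemma norm_smul_lt {a : 𝕜} {S : X} {ε : ℝ} (h : ‖S‖ < ε / (‖a‖ + 1)) :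
    ‖a • S‖ < ε := by
  rw [norm_smul]
  have h0 : 0 < ‖a‖ + 1 := by positivity
  rw [lt_div_iff₀ h0] at h
  nlinarith [norm_nonneg a, norm_nonneg S]

lemma PA_span (T : X →L[𝕜] X) (s : Set X) (hs : ∀ x ∈ s, PA T x) (x : X)
    (hx : x ∈ Submodule.span 𝕜 s) : PA T x := by
  induction hx using Submodule.span_induction with
  | mem x h => exact hs x h
  | zero => exact fun ε hε => ⟨1, le_rfl, fun n _ _ => ⟨0, by simpa using hε, by simp⟩⟩
  | add x y _ _ hx hy =>
    intro ε hε
    obtain ⟨N, hN, h⟩ := hx (ε / 2) (by positivity)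
    obtain ⟨M, hM, h'⟩ := hy (ε / 2) (by positivity)
    refine ⟨N * M, Nat.mul_pos hN hM, fun n hn hd => ?_⟩
    obtain ⟨S, hS, hS'⟩ := h n hn ((Dvd.intro _ rfl).trans hd)
    obtain ⟨R, hR, hR'⟩ := h' n hn ((Dvd.intro_left _ rfl).trans hd)
    refine ⟨S + R, ?_, ?_⟩
    · linarith [norm_add_le S R]
    · rw [add_add_add_comm, map_add, hS', hR']
  | smul a x _ hx =>
    intro ε hε
    obtain ⟨N, hN, h⟩ := hx (ε / (‖a‖ + 1)) (by positivity)
    refine ⟨N, hN, fun n hn hd => ?_⟩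
    obtain ⟨S, hS, hS'⟩ := h n hn hd
    exact ⟨a • S, norm_smul_lt hS, by rw [← smul_add, map_smul, hS']⟩

lemma PB_span (T : X →L[𝕜] X) (s : Set X) (hs : ∀ x ∈ s, PB T x) (x : X)
    (hx : x ∈ Submodule.span 𝕜 s) : PB T x := by
  induction hx using Submodule.span_induction with
  | mem x h => exact hs x h
  | zero => exact fun ε hε => ⟨1, fun n _ => ⟨0, by simpa using hε, by simp⟩⟩
  | add x y _ _ hx hy =>
    intro ε hε
    obtain ⟨N, h⟩ := hx (ε / 2) (by positivity)
    obtain ⟨M, h'⟩ := hy (ε / 2) (by positivity)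
    refine ⟨max N M, fun n hn => ?_⟩
    obtain ⟨S, hS, hS'⟩ := h n ((le_max_left _ _).trans hn)
    obtain ⟨R, hR, hR'⟩ := h' n ((le_max_right _ _).trans hn)
    refine ⟨S + R, ?_, ?_⟩
    · linarith [norm_add_le S R]
    · rw [add_add_add_comm, map_add, hS', hR']
  | smul a x _ hx =>
    intro ε hε
    obtain ⟨N, h⟩ := hx (ε / (‖a‖ + 1)) (by positivity)
    refine ⟨N, fun n hn => ?_⟩
    obtain ⟨S, hS, hS'⟩ := h n hn
    exact ⟨a • S, norm_smul_lt hS, by rw [← smul_add, map_smul, hS']⟩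

lemma hypercyclic_of_transitive [CompleteSpace X] [SecondCountableTopology X] (T : X →L[𝕜] X)
    (h : ∀ U₁ U₂ : Set X, IsOpen U₁ → IsOpen U₂ → U₁.Nonempty → U₂.Nonempty →
      ∃ (n : ℕ) (z : X), z ∈ U₁ ∧ (T ^ n) z ∈ U₂) : Hypercyclic T := by
  have hb := TopologicalSpace.isBasis_countableBasis X
  have hd : Dense (⋂ b : ↥(TopologicalSpace.countableBasis X), ⋃ n : ℕ, (T ^ n) ⁻¹' b.1) := by
    have : Countable ↥(TopologicalSpace.countableBasis X) :=
      (TopologicalSpace.countable_countableBasis X).to_subtype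
    refine dense_iInter_of_isOpen (fun b => ?_) (fun b => ?_)
    · exact isOpen_iUnion fun n => (hb.isOpen b.2).preimage (T ^ n).continuous
    · rw [dense_iff_inter_open]
      intro U hU hUne
      obtain ⟨n, z, hz, hz'⟩ := h U b.1 hU (hb.isOpen b.2) hUne
        (TopologicalSpace.nonempty_of_mem_countableBasis b.2)
      exact ⟨z, hz, Set.mem_iUnion.2 ⟨n, hz'⟩⟩
  obtain ⟨x, hx⟩ := hd.nonempty
  refine ⟨x, ?_⟩
  rw [hb.dense_iff]
  intro o ho _
  have := Set.mem_iInter.1 hx ⟨o, ho⟩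
  obtain ⟨n, hn⟩ := Set.mem_iUnion.1 this
  exact ⟨(T ^ n) x, hn, n, rfl⟩

lemma chaotic_of [CompleteSpace X] (T : X →L[𝕜] X) (s : Set X) (hc : s.Countable)
    (hd : Dense (Submodule.span 𝕜 s : Set X))
    (hA : ∀ x ∈ s, PA T x) (hB : ∀ x ∈ s, PB T x) : ChaoticOp T := by
  have hA' := PA_span T s hA
  have hB' := PB_span T s hB
  have : TopologicalSpace.SeparableSpace X := by
    have h1 := (hc.isSeparable.span (R := 𝕜)).closure
    rw [hd.closure_eq] at h1
    exact TopologicalSpace.isSeparable_univ_iff.1 h1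
  have : SecondCountableTopology X := UniformSpace.secondCountable_of_separable X
  have key : ∀ x ∈ Submodule.span 𝕜 s, ∀ y ∈ Submodule.span 𝕜 s, ∀ ε : ℝ, 0 < ε →
      ∃ (n : ℕ) (S Q : X), 1 ≤ n ∧ ‖S‖ < ε ∧ ‖Q‖ < ε ∧ (T ^ n) (x + S) = S ∧ (T ^ n) Q = y + Q := by
    intro x hx y hy ε hε
    obtain ⟨N, hN, h⟩ := hA' x hx ε hε
    obtain ⟨n0, h'⟩ := hB' y hy ε hε
    have hn : 1 ≤ N * (n0 + 1) := Nat.mul_pos hN (Nat.succ_pos _)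
    obtain ⟨S, hS, hS'⟩ := h (N * (n0 + 1)) hn (Dvd.intro _ rfl)
    obtain ⟨Q, hQ, hQ'⟩ := h' (N * (n0 + 1)) (by nlinarith)
    exact ⟨_, S, Q, hn, hS, hQ, hS', hQ'⟩
  refine ⟨hypercyclic_of_transitive T ?_, ?_⟩
  · intro U₁ U₂ hU₁ hU₂ hn₁ hn₂
    obtain ⟨x, hx, hxs⟩ := hd.inter_open_nonempty U₁ hU₁ hn₁
    obtain ⟨y, hy, hys⟩ := hd.inter_open_nonempty U₂ hU₂ hn₂
    obtain ⟨ε₁, hε₁, hb₁⟩ := Metric.isOpen_iff.1 hU₁ x hx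
    obtain ⟨ε₂, hε₂, hb₂⟩ := Metric.isOpen_iff.1 hU₂ y hy
    obtain ⟨n, S, Q, -, hS, hQ, hS', hQ'⟩ := key x hxs y hys (min ε₁ ε₂ / 2) (by positivity)
    have hSQ : ‖S + Q‖ < min ε₁ ε₂ := by linarith [norm_add_le S Q]
    refine ⟨n, x + S + Q, hb₁ ?_, hb₂ ?_⟩
    · rw [mem_ball_iff_norm, add_assoc, add_sub_cancel_left]
      exact hSQ.trans_le (min_le_left _ _)
    · rw [mem_ball_iff_norm, map_add, hS', hQ']
      rw [show S + (y + Q) - y = S + Q by abel]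
      exact hSQ.trans_le (min_le_right _ _)
  · rw [dense_iff_inter_open]
    intro U hU hne
    obtain ⟨x, hx, hxs⟩ := hd.inter_open_nonempty U hU hne
    obtain ⟨ε, hε, hb⟩ := Metric.isOpen_iff.1 hU x hx
    obtain ⟨n, S, Q, hn, hS, hQ, hS', hQ'⟩ := key x hxs x hxs (ε / 2) (by positivity)
    refine ⟨x + S + Q, hb ?_, n, hn, ?_⟩
    · rw [mem_ball_iff_norm, add_assoc, add_sub_cancel_left]
      linarith [norm_add_le S Q]
    · rw [map_add, hS', hQ']; abel

end dyn

/-! ### Auxiliary: the space -/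

section space
variable {𝕜 : Type*} [RCLike 𝕜] {V : Type*} {X : Type*} [NormedAddCommGroup X] [NormedSpace 𝕜 X]
  {ι : X →ₗ[𝕜] V → 𝕜} {μ : V → 𝕜} {p : ℝ}

lemma enorm_pow (hX : IsLpSpaceRep ι μ p) (hp : 1 < p) (x : X) :
    (‖x‖₊ : ℝ≥0∞) ^ p = ∑' v, ((‖ι x v‖₊ : ℝ≥0∞) * nw μ v) ^ p := by
  have hp0 : 0 < p := by linarith
  rw [hX.2.2 x, ← ENNReal.rpow_mul, one_div_mul_cancel hp0.ne', ENNReal.rpow_one]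
  simp [nw]

lemma exists_rep (hX : IsLpSpaceRep ι μ p) (f : V → 𝕜)
    (hf : ∑' v, ((‖f v‖₊ : ℝ≥0∞) * nw μ v) ^ p ≠ ⊤) : ∃ x : X, ι x = f := by
  refine (hX.2.1 f).1 ?_
  rw [lt_top_iff_ne_top]
  simpa [nw] using hf

lemma norm_le_of_tsum (hX : IsLpSpaceRep ι μ p) (hp : 1 < p) (x : X) {c : ℝ≥0∞}
    (h : ∑' v, ((‖ι x v‖₊ : ℝ≥0∞) * nw μ v) ^ p ≤ c ^ p) : (‖x‖₊ : ℝ≥0∞) ≤ c := by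
  have hp0 : 0 < p := by linarith
  rw [← enorm_pow hX hp] at h
  exact (ENNReal.rpow_le_rpow_iff hp0).1 h

lemma coord_le (hX : IsLpSpaceRep ι μ p) (hp : 1 < p) (x : X) (v : V) :
    ‖ι x v‖ * ‖μ v‖ ≤ ‖x‖ := by
  have hp0 : 0 < p := by linarith
  have h := enorm_pow hX hp x
  have h1 := ENNReal.le_tsum (f := fun v => ((‖ι x v‖₊ : ℝ≥0∞) * nw μ v) ^ p) v
  rw [← h] at h1
  have h2 := (ENNReal.rpow_le_rpow_iff hp0).1 h1
  rw [nw] at h2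
  exact_mod_cast h2

lemma coord_cont (hX : IsLpSpaceRep ι μ p) (hμ : ∀ v, μ v ≠ 0) (hp : 1 < p) (v : V) :
    ∃ φ : X →L[𝕜] 𝕜, ∀ x, φ x = ι x v := by
  refine ⟨LinearMap.mkContinuous ((LinearMap.proj v).comp ι) (‖μ v‖⁻¹) fun x => ?_, fun x => rfl⟩
  have h0 : 0 < ‖μ v‖ := norm_pos_iff.2 (hμ v)
  have := coord_le hX hp x v
  rw [inv_mul_eq_div, le_div_iff₀ h0]
  exact this

lemma exists_basis (hX : IsLpSpaceRep ι μ p) (hp : 1 < p) :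
    ∃ e : V → X, (∀ u, ι (e u) = Pi.single u 1) ∧
      ∀ x, HasSum (fun u => ι x u • e u) x := by
  have hp0 : 0 < p := by linarith
  have h1 : ∀ u, ∃ x : X, ι x = Pi.single u 1 := by
    intro u
    refine exists_rep hX _ ?_
    rw [tsum_eq_single u]
    · simp [nw, hp0.le]
    · intro v hv; simp [hv, hp0]
  choose e he using h1
  refine ⟨e, he, fun x => ?_⟩
  set P := ENNReal.ofReal p with hP
  have hPr : P.toReal = p := ENNReal.toReal_ofReal hp0.le
  have : Fact (1 ≤ P) := ⟨by rw [hP, ← ENNReal.ofReal_one]; exact ENNReal.ofReal_le_ofReal hp.le⟩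
  have hr : ∀ y : X, ∑' v, ENNReal.ofReal (‖ι y v * μ v‖ ^ p) = ENNReal.ofReal (‖y‖ ^ p) := by
    intro y
    have := enorm_pow hX hp y
    rw [← ENNReal.ofReal_rpow_of_nonneg (norm_nonneg _) hp0.le, ofReal_norm]
    rw [show ‖y‖ₑ = (‖y‖₊ : ℝ≥0∞) from rfl, this]
    refine tsum_congr fun v => ?_
    rw [← ENNReal.ofReal_rpow_of_nonneg (norm_nonneg _) hp0.le, ofReal_norm, enorm_mul]
    rfl
  have hs : ∀ y : X, HasSum (fun v => ‖ι y v * μ v‖ ^ p) (‖y‖ ^ p) := by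
    intro y
    have hsm : Summable (fun v => ‖ι y v * μ v‖ ^ p) := by
      have h2 : ∑' v, ENNReal.ofReal (‖ι y v * μ v‖ ^ p) ≠ ⊤ := by
        rw [hr]; exact ENNReal.ofReal_ne_top
      have h3 := ENNReal.summable_toReal h2
      refine h3.congr fun v => ?_
      rw [ENNReal.toReal_ofReal (by positivity)]
    have h4 := hr y
    rw [← ENNReal.ofReal_tsum_of_nonneg (fun v => by positivity) hsm] at h4
    rw [ENNReal.ofReal_eq_ofReal_iff (tsum_nonneg fun v => by positivity) (by positivity)] at h4
    rw [← h4]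
    exact hsm.hasSum
  have hmem : ∀ y : X, Memℓp (fun v => ι y v * μ v) P := by
    intro y
    rw [memℓp_gen_iff (by rw [hPr]; exact hp0), hPr]
    exact (hs y).summable
  let Φ₀ : X →ₗ[𝕜] lp (fun _ : V => 𝕜) P :=
    { toFun := fun y => ⟨fun v => ι y v * μ v, hmem y⟩
      map_add' := by intro a b; ext v; simp [add_mul]; rfl
      map_smul' := by intro a b; ext v; simp [mul_assoc] }
  let Φ : X →ₗᵢ[𝕜] lp (fun _ : V => 𝕜) P :=
    { Φ₀ with
      norm_map' := by
        intro y
        rw [lp.norm_eq_tsum_rpow (by rw [hPr]; exact hp0), hPr]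
        change (∑' v, ‖ι y v * μ v‖ ^ p) ^ (1 / p) = ‖y‖
        rw [(hs y).tsum_eq, ← Real.rpow_mul (norm_nonneg _), mul_one_div_cancel hp0.ne',
          Real.rpow_one] }
  have hΦ : ∀ y v, (Φ y : V → 𝕜) v = ι y v * μ v := fun y v => rfl
  rw [← Φ.isometry.isUniformInducing.isInducing.hasSum_iff (g := Φ)]
  have h5 := lp.hasSum_single (p := P) ENNReal.ofReal_ne_top (Φ x)
  convert h5 using 1
  ext u v
  simp only [Function.comp]
  rw [hΦ, map_smul, he, hΦ, lp.single_apply]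
  by_cases h : v = u
  · subst h; simp
  · simp [h]

end space

/-! ### Auxiliary: the unrooted tree -/

section tree
variable {V : Type*} {par : V → Option V} {P : V → V}

lemma parIter_some (hP : ∀ u, par u = some (P u)) (n : ℕ) :
    ∀ u, parIter par n u = some (P^[n] u) := by
  induction n with
  | zero => intro u; rfl
  | succ n ih => intro u; rw [parIter, hP u]; simp [ih]

lemma iter_inj (hP : ∀ u, par u = some (P u)) (hTree : IsDirectedTree par) (v : V) {m n : ℕ}
    (h : P^[m] v = P^[n] v) : m = n := by
  wlog hmn : m ≤ n generalizing m n
  · exact (this h.symm (by omega)).symm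
  by_contra hne
  obtain ⟨k, rfl⟩ := Nat.exists_eq_add_of_le hmn
  apply hTree.acyclic (P^[m] v) k (by omega)
  rw [parIter_some hP, ← Function.iterate_add_apply, add_comm, ← h]

lemma exists_gen (hP : ∀ u, par u = some (P u)) (hTree : IsDirectedTree par) (v : V) :
    ∃ G : V → ℤ, G v = 0 ∧ ∀ u (n : ℕ), G (P^[n] u) = G u - n := by
  have h1 : ∀ u, ∃ g : ℤ, ∀ m n : ℕ, P^[m] u = P^[n] v → (m : ℤ) - n = g := by
    intro u
    obtain ⟨m, n, w, h1, h2⟩ := hTree.connected u v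
    rw [parIter_some hP] at h1 h2
    have h3 : P^[m] u = P^[n] v := by rw [Option.some.inj h1, Option.some.inj h2]
    refine ⟨(m : ℤ) - n, fun m' n' h' => ?_⟩
    have h4 : P^[m' + n] v = P^[m + n'] v := by
      rw [Function.iterate_add_apply, ← h3, ← Function.iterate_add_apply,
        Function.iterate_add_apply _ m n', ← h', ← Function.iterate_add_apply, add_comm]
    have := iter_inj hP hTree v h4
    omega
  choose G hG using h1
  refine ⟨G, ?_, ?_⟩
  · have := hG v 0 0 rfl; simpa using this.symm
  · intro u k
    obtain ⟨m, n, w, h1, h2⟩ := hTree.connected (P^[k] u) v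
    rw [parIter_some hP] at h1 h2
    have h3 : P^[m] (P^[k] u) = P^[n] v := by rw [Option.some.inj h1, Option.some.inj h2]
    have h4 := hG _ _ _ h3
    rw [← Function.iterate_add_apply] at h3
    have h5 := hG _ _ _ h3
    push_cast at h5
    omega

end tree

section shift
variable {𝕜 : Type*} [RCLike 𝕜] {V : Type*} {X : Type*} [NormedAddCommGroup X] [NormedSpace 𝕜 X]
  {ι : X →ₗ[𝕜] V → 𝕜} {μ : V → 𝕜} {p : ℝ} {par : V → Option V} {P : V → V} {T : X →L[𝕜] X}
  {e : V → X}

lemma T_e (hP : ∀ u, par u = some (P u)) (hX : IsLpSpaceRep ι μ p)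
    (hT : IsShiftRep par (fun _ : V => (1 : 𝕜)) ι T)
    (he : ∀ u, ι (e u) = Pi.single u 1) (u : V) : T (e u) = e (P u) := by
  apply hX.1
  ext v
  have h := hT (e u) v
  rw [he] at h ⊢
  simp only [one_mul] at h
  by_cases hv : v = P u
  · subst hv
    have h2 := hasSum_single (f := fun x : ↥(children par (P u)) => (Pi.single u 1 : V → 𝕜) x.1)
      ⟨u, hP u⟩ (by
        intro y hy
        rw [Pi.single_eq_of_ne]
        intro h; exact hy (Subtype.ext h))
    rw [h.unique h2]; simp
  · have h2 : HasSum (fun x : ↥(children par v) => (Pi.single u 1 : V → 𝕜) x.1) 0 := by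
      convert hasSum_zero with x
      rw [Pi.single_eq_of_ne]
      intro h
      have h3 : par x.1 = some v := x.2
      rw [h, hP u] at h3
      exact hv (Option.some.inj h3).symm
    rw [h.unique h2, Pi.single_eq_of_ne hv]

lemma Tn_e (hP : ∀ u, par u = some (P u)) (hX : IsLpSpaceRep ι μ p)
    (hT : IsShiftRep par (fun _ : V => (1 : 𝕜)) ι T)
    (he : ∀ u, ι (e u) = Pi.single u 1) (n : ℕ) : ∀ u : V, (T ^ n) (e u) = e (P^[n] u) := by
  induction n with
  | zero => intro u; simp
  | succ n ih =>
    intro u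
    rw [pow_succ, mul_apply_eq_comp, T_e hP hX hT he, ih, Function.iterate_succ_apply]

lemma Tn_coord (hP : ∀ u, par u = some (P u)) (hX : IsLpSpaceRep ι μ p) (hμ : ∀ v, μ v ≠ 0)
    (hp : 1 < p) (hT : IsShiftRep par (fun _ : V => (1 : 𝕜)) ι T) (n : ℕ) (x : X) (w : V) :
    HasSum (fun u => if P^[n] u = w then ι x u else 0) (ι ((T ^ n) x) w) := by
  obtain ⟨e, he, hs⟩ := exists_basis hX hp
  obtain ⟨φ, hφ⟩ := coord_cont hX hμ hp w
  have h1 := (φ.comp (T ^ n)).hasSum (hs x)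
  convert h1 using 1
  · ext u
    simp only [ContinuousLinearMap.comp_apply, map_smul]
    rw [hφ, Tn_e hP hX hT he, he, Pi.single_apply]
    simp [eq_comm]
  · simp [hφ]

lemma nnnorm_toReal {a : ℝ≥0∞} (ha : a ≠ ⊤) : (‖((a.toReal : ℝ) : 𝕜)‖₊ : ℝ≥0∞) = a := by
  rw [show ((‖((a.toReal : ℝ) : 𝕜)‖₊ : ℝ≥0∞)) = ‖((a.toReal : ℝ) : 𝕜)‖ₑ from rfl,
    ← ofReal_norm, RCLike.norm_ofReal, abs_of_nonneg ENNReal.toReal_nonneg,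
    ENNReal.ofReal_toReal ha]

lemma fiber_sum (hP : ∀ u, par u = some (P u)) (hX : IsLpSpaceRep ι μ p) (hμ : ∀ v, μ v ≠ 0)
    (hp : 1 < p) (hT : IsShiftRep par (fun _ : V => (1 : 𝕜)) ι T) (n : ℕ) (w : V) :
    ∑' u : ↥{u | P^[n] u = w}, nw μ u.1 ^ (-conjExp p) ≠ ⊤ := by
  have hc := conjExp_holder hp
  have hq := hc.symm.pos
  have hp0 := hc.pos
  obtain ⟨φ, hφ⟩ := coord_cont hX hμ hp w
  set C : ℝ≥0∞ := (‖φ.comp (T ^ n)‖₊ : ℝ≥0∞) with hC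
  have hw0 : ∀ v, nw μ v ≠ 0 := by intro v; simp [nw, hμ]
  have hwt : ∀ v, nw μ v ≠ ⊤ := by intro v; simp [nw]
  rw [tsum_subtype _ (fun u => nw μ u ^ (-conjExp p)), ENNReal.tsum_eq_iSup_sum]
  refine ne_top_of_le_ne_top (b := (C ^ p) ^ (1 / (p - 1))) ?_ (iSup_le fun F => ?_)
  · refine ENNReal.rpow_ne_top_of_nonneg (one_div_nonneg.2 (by linarith))
      (ENNReal.rpow_ne_top_of_nonneg hp0.le ENNReal.coe_ne_top)
  set a : V → ℝ≥0∞ := Set.indicator {u | P^[n] u = w} (fun u => nw μ u ^ (-conjExp p)) with ha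
  set A := ∑ u ∈ F, a u with hA
  have hat : ∀ u, a u ≠ ⊤ := by
    intro u
    rw [ha, Set.indicator_apply]
    split_ifs
    · rw [ENNReal.rpow_neg]
      refine ENNReal.inv_ne_top.2 ?_
      rw [Ne, ENNReal.rpow_eq_zero_iff_of_pos hq]
      exact hw0 u
    · simp
  have hAt : A ≠ ⊤ := ENNReal.sum_ne_top.2 fun u _ => hat u
  have haw : ∀ u, (a u * nw μ u) ^ p = a u := by
    intro u
    rw [ha, Set.indicator_apply]
    split_ifs
    · nth_rewrite 2 [← ENNReal.rpow_one (nw μ u)]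
      rw [← ENNReal.rpow_add _ _ (hw0 u) (hwt u), ← ENNReal.rpow_mul]
      congr 1
      have h1 : p - 1 ≠ 0 := by linarith
      rw [conjExp]
      field_simp
      ring
    · simp [hp0]
  let f : V → 𝕜 := fun u => if u ∈ F then (((a u).toReal : ℝ) : 𝕜) else 0
  have hfn : ∀ u, (‖f u‖₊ : ℝ≥0∞) = if u ∈ F then a u else 0 := by
    intro u
    simp only [f]
    split_ifs
    · exact nnnorm_toReal (hat u)
    · simp
  have hfs : ∑' v, ((‖f v‖₊ : ℝ≥0∞) * nw μ v) ^ p = A := by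
    rw [tsum_eq_sum (s := F)]
    · refine Finset.sum_congr rfl fun u hu => ?_
      rw [hfn, if_pos hu, haw]
    · intro u hu
      rw [hfn, if_neg hu]; simp [hp0]
  obtain ⟨x, hx⟩ := exists_rep hX f (by rw [hfs]; exact hAt)
  have hxn : (‖x‖₊ : ℝ≥0∞) ^ p = A := by rw [enorm_pow hX hp, hx, hfs]
  have hφx : φ ((T ^ n) x) = ((A.toReal : ℝ) : 𝕜) := by
    rw [hφ]
    refine (Tn_coord hP hX hμ hp hT n x w).unique ?_
    have h2 : (fun u => if P^[n] u = w then ι x u else 0) = f := by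
      ext u
      rw [hx]
      simp only [f]
      by_cases h : P^[n] u = w
      · simp [h]
      · simp [ha, h]
    rw [h2, hA, ENNReal.toReal_sum fun u _ => hat u]
    push_cast
    have h3 : HasSum f (∑ b ∈ F, f b) := hasSum_sum_of_ne_finset_zero (f := f) (s := F) (by
      intro u hu; simp [f, hu])
    convert h3 using 1
    exact Finset.sum_congr rfl fun u hu => by simp [f, hu]
  have h4 : A ≤ C * ‖x‖₊ := by
    have h5 := (φ.comp (T ^ n)).le_opNNNorm x
    rw [ContinuousLinearMap.comp_apply, hφx] at h5
    have h6 : (‖((A.toReal : ℝ) : 𝕜)‖₊ : ℝ≥0∞) = A := nnnorm_toReal hAt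
    rw [← h6, hC]
    exact_mod_cast h5
  have h7 : A ^ p ≤ C ^ p * A := by
    calc A ^ p ≤ (C * ‖x‖₊) ^ p := by gcongr
      _ = C ^ p * A := by rw [ENNReal.mul_rpow_of_nonneg _ _ hp0.le, hxn]
  by_cases hA0 : A = 0
  · rw [hA0]; exact bot_le
  rw [one_div, ENNReal.le_rpow_inv_iff (by linarith), ENNReal.rpow_sub _ _ hA0 hAt, ENNReal.rpow_one]
  exact ENNReal.div_le_of_le_mul h7

end shift

section minus
variable {V : Type*} {par : V → Option V} {P : V → V}

lemma mem_cm (hP : ∀ u, par u = some (P u)) (v : V) (N : ℕ) (w u : V) :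
    u ∈ childrenMinus par v N w ↔ ((∀ n, P^[n * N] v ≠ w) ∧ P^[N] u = w) ∨
      ∃ n, P^[n * N] v = w ∧ (P^[(n + 1) * N] v = u ∨ (P^[N] u = P^[(n + 1) * N] v ∧ u ≠ w)) := by
  simp only [childrenMinus, spine, parIter_some hP, Set.mem_ofPred_eq, Option.some.injEq, not_exists]
  simp [eq_comm]

lemma cm_nonspine (hP : ∀ u, par u = some (P u)) {v : V} {N : ℕ} {w : V}
    (h : ∀ n, P^[n * N] v ≠ w) : childrenMinus par v N w = {u | P^[N] u = w} := by
  ext u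
  rw [mem_cm hP]
  constructor
  · rintro (h1 | ⟨n, hn, _⟩)
    · exact h1.2
    · exact absurd hn (h n)
  · exact fun h1 => Or.inl ⟨h, h1⟩

lemma cm_spine (hP : ∀ u, par u = some (P u)) (hTree : IsDirectedTree par) {v : V} {N : ℕ}
    (hN : 1 ≤ N) (n : ℕ) : childrenMinus par v N (P^[n * N] v) =
      insert (P^[(n + 1) * N] v) {u | P^[N] u = P^[(n + 1) * N] v ∧ u ≠ P^[n * N] v} := by
  ext u
  rw [mem_cm hP]
  constructor
  · rintro (h1 | ⟨m, hm, h⟩)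
    · exact absurd rfl (h1.1 n)
    · have : m = n := Nat.eq_of_mul_eq_mul_right hN (iter_inj hP hTree v hm)
      subst this
      rcases h with h | h
      · exact Or.inl h.symm
      · exact Or.inr h
  · rintro (h | h)
    · exact Or.inr ⟨n, rfl, Or.inl h.symm⟩
    · exact Or.inr ⟨n, rfl, Or.inr h⟩

lemma iter_add_N (P : V → V) (N n : ℕ) (v : V) : P^[N] (P^[n * N] v) = P^[(n + 1) * N] v := by
  rw [← Function.iterate_add_apply]; congr 2; ring

lemma iter_P_ne (hP : ∀ u, par u = some (P u)) (hTree : IsDirectedTree par) {N : ℕ}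
    (hN : 1 ≤ N) (v : V) : P^[N] v ≠ v := by
  intro h
  have := iter_inj hP hTree v (m := N) (n := 0) h
  omega

lemma cm_spine_tsum (hP : ∀ u, par u = some (P u)) (hTree : IsDirectedTree par) {v : V} {N : ℕ}
    (hN : 1 ≤ N) (n : ℕ) (f : V → ℝ≥0∞) :
    ∑' u : ↥(childrenMinus par v N (P^[n * N] v)), f u.1 = f (P^[(n + 1) * N] v) +
      ∑' u, if P^[N] u = P^[(n + 1) * N] v ∧ u ≠ P^[n * N] v then f u else 0 := by
  rw [cm_spine hP hTree hN, tsum_subtype]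
  rw [← tsum_pi_single (P^[(n + 1) * N] v) (f (P^[(n + 1) * N] v)), ← ENNReal.tsum_add]
  refine tsum_congr fun u => ?_
  by_cases hu : u = P^[(n + 1) * N] v
  · subst hu
    simp [iter_P_ne hP hTree hN]
  · rw [Pi.single_eq_of_ne hu, zero_add, Set.indicator_apply]
    simp [hu]

lemma cm_nonspine_tsum (hP : ∀ u, par u = some (P u)) {v : V} {N : ℕ} {w : V}
    (h : ∀ n, P^[n * N] v ≠ w) (f : V → ℝ≥0∞) :
    ∑' u : ↥(childrenMinus par v N w), f u.1 = ∑' u, if P^[N] u = w then f u else 0 := by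
  rw [cm_nonspine hP h, tsum_subtype]
  refine tsum_congr fun u => ?_
  rw [Set.indicator_apply]; rfl

lemma exists_q (hP : ∀ u, par u = some (P u)) (hTree : IsDirectedTree par) (v : V) {N : ℕ}
    (hN : 1 ≤ N) : ∃ q : V → Option V, childrenMinus par v N = children q ∧ q v = none ∧
      ∀ u, P^[N] u = v → q u = none := by
  have huniq : ∀ u w w', u ∈ childrenMinus par v N w → u ∈ childrenMinus par v N w' → w = w' := by
    intro u w w' h h'
    rw [mem_cm hP] at h h'
    rcases h with ⟨h1, h2⟩ | ⟨n, h1, h2 | h2⟩ <;> rcases h' with ⟨h1', h2'⟩ | ⟨n', h1', h2' | h2'⟩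
    · rw [← h2, ← h2']
    · exact absurd (by rw [← h2, ← h2', iter_add_N]) (h1 (n' + 1 + 1))
    · exact absurd (by rw [← h2, h2'.1]) (h1 (n' + 1))
    · exact absurd (by rw [← h2', ← h2, iter_add_N]) (h1' (n + 1 + 1))
    · have h3 := iter_inj hP hTree v (h2.trans h2'.symm)
      have h4 := Nat.eq_of_mul_eq_mul_right hN h3
      have : n = n' := by omega
      rw [← h1, ← h1', this]
    · rw [← h2, iter_add_N] at h2'
      have h4 := Nat.eq_of_mul_eq_mul_right hN (iter_inj hP hTree v h2'.1)
      have : n' = n + 1 := by omega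
      subst this
      exact absurd h1' h2'.2
    · exact absurd (by rw [← h2', h2.1]) (h1' (n + 1))
    · rw [← h2', iter_add_N] at h2
      have h4 := Nat.eq_of_mul_eq_mul_right hN (iter_inj hP hTree v h2.1)
      have : n = n' + 1 := by omega
      subst this
      exact absurd h1 h2.2
    · have h3 := iter_inj hP hTree v (h2.1.symm.trans h2'.1)
      have h4 := Nat.eq_of_mul_eq_mul_right hN h3
      have : n = n' := by omega
      rw [← h1, ← h1', this]
  let q : V → Option V := fun u =>
    if h : ∃ w, u ∈ childrenMinus par v N w then some h.choose else none
  have hq : ∀ u, (∀ w, u ∉ childrenMinus par v N w) → q u = none := by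
    intro u hu
    simp only [q]
    rw [dif_neg]
    push Not
    exact hu
  refine ⟨q, ?_, hq v ?_, fun u hu => hq u ?_⟩
  · ext w u
    simp only [children, Set.mem_ofPred_eq, q]
    constructor
    · intro h
      have hex : ∃ w, u ∈ childrenMinus par v N w := ⟨w, h⟩
      rw [dif_pos hex, huniq u _ _ hex.choose_spec h]
    · intro h
      split_ifs at h with hex
      rw [← Option.some.inj h]
      exact hex.choose_spec
  · intro w h
    rw [mem_cm hP] at h
    rcases h with ⟨h1, h2⟩ | ⟨n, h1, h2 | h2⟩
    · exact h1 1 (by simpa using h2)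
    · exact iter_P_ne hP hTree (N := (n+1) * N) (Nat.mul_pos n.succ_pos hN) v h2
    · have h3 := iter_inj hP hTree v h2.1
      have h4 : n = 0 := by nlinarith
      subst h4
      exact h2.2 (by simpa using h1)
  · intro w h
    rw [mem_cm hP] at h
    rcases h with ⟨h1, h2⟩ | ⟨n, h1, h2 | h2⟩
    · exact h1 0 (by simpa using hu.symm.trans h2)
    · rw [← h2, iter_add_N] at hu
      exact iter_P_ne hP hTree (N := (n+1+1) * N) (Nat.mul_pos (Nat.succ_pos _) hN) v hu
    · rw [hu] at h2
      exact iter_P_ne hP hTree (N := (n+1) * N) (Nat.mul_pos n.succ_pos hN) v h2.1.symm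

lemma iter_surj (hP : ∀ u, par u = some (P u)) (hLeafless : Leafless par) (n : ℕ) (w : V) :
    ∃ u, P^[n] u = w := by
  induction n with
  | zero => exact ⟨w, rfl⟩
  | succ n ih =>
    obtain ⟨u, hu⟩ := ih
    obtain ⟨x, hx⟩ := Set.nonempty_iff_ne_empty.2 (hLeafless u)
    refine ⟨x, ?_⟩
    have : par x = some u := hx
    rw [hP] at this
    rw [Function.iterate_succ_apply, Option.some.inj this, hu]

lemma cm_nonempty (hP : ∀ u, par u = some (P u)) (hLeafless : Leafless par) (v : V) (N : ℕ)
    (w : V) : childrenMinus par v N w ≠ ∅ := by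
  rw [← Set.nonempty_iff_ne_empty]
  by_cases h : ∃ n, P^[n * N] v = w
  · obtain ⟨n, hn⟩ := h
    exact ⟨P^[(n + 1) * N] v, (mem_cm hP v N w _).2 (Or.inr ⟨n, hn, Or.inl rfl⟩)⟩
  · push Not at h
    obtain ⟨u, hu⟩ := iter_surj hP hLeafless N w
    exact ⟨u, (mem_cm hP v N w _).2 (Or.inl ⟨h, hu⟩)⟩

end minus

section forward
variable {𝕜 : Type*} [RCLike 𝕜] {V : Type*} {X : Type*} [NormedAddCommGroup X] [NormedSpace 𝕜 X]
  {ι : X →ₗ[𝕜] V → 𝕜} {μ : V → 𝕜} {p : ℝ} {par : V → Option V} {P : V → V} {T : X →L[𝕜] X}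
  {e : V → X}

lemma hasSum_nnnorm_le {α : Type*} {f : α → 𝕜} {a : 𝕜} (h : HasSum f a) :
    (‖a‖₊ : ℝ≥0∞) ≤ ∑' i, (‖f i‖₊ : ℝ≥0∞) := by
  have h1 : Summable fun i => ‖f i‖₊ := by
    rw [← NNReal.summable_coe]; exact h.summable.norm
  rw [← ENNReal.coe_tsum h1, ENNReal.coe_le_coe, ← h.tsum_eq]
  exact nnnorm_tsum_le h1

lemma nw_ne_zero (hμ : ∀ v, μ v ≠ 0) (v : V) : nw μ v ≠ 0 := by simp [nw, hμ]
lemma nw_ne_top (v : V) : nw μ v ≠ ⊤ := by simp [nw]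

lemma pow_mul_fix {N : ℕ} {x : X} (hx : (T ^ N) x = x) (k : ℕ) : (T ^ (N * k)) x = x := by
  induction k with
  | zero => simp
  | succ k ih => rw [Nat.mul_succ, pow_add, mul_apply_eq_comp, hx, ih]

lemma fwd1 (hP : ∀ u, par u = some (P u)) (hTree : IsDirectedTree par)
    (hX : IsLpSpaceRep ι μ p) (hμ : ∀ v, μ v ≠ 0)
    (hp : 1 < p) (hT : IsShiftRep par (fun _ : V => (1 : 𝕜)) ι T) (v : V) (x : X)
    (hxv : ι x v ≠ 0) {N : ℕ} (hN : 1 ≤ N) (hx : (T ^ N) x = x) :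
    cpC (children par) (nw μ) p v < ⊤ := by
  have hp0 : 0 < p := by linarith
  obtain ⟨G, hG0, hG⟩ := exists_gen hP hTree v
  let g : V → ℝ≥0∞ := fun u => if ∃ k, P^[k] u = v then
    (‖ι ((T ^ ((N - 1) * (G u).toNat)) x) u‖₊ : ℝ≥0∞) else 0
  have hgv : g v = (‖ι x v‖₊ : ℝ≥0∞) := by
    simp only [g]
    rw [if_pos ⟨0, rfl⟩, hG0]; simp
  have hg : ∀ w, g w ≤ ∑' u : ↥(children par w), g u.1 := by
    intro w
    by_cases hw : ∃ k, P^[k] w = v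
    · have hw' := hw
      obtain ⟨k, hk⟩ := hw
      have hGw : G w = k := by have := hG w k; rw [hk, hG0] at this; omega
      have hgw : g w = (‖ι ((T ^ ((N - 1) * k)) x) w‖₊ : ℝ≥0∞) := by
        simp only [g]; rw [if_pos hw', hGw]; simp
      have hgu : ∀ u : ↥(children par w),
          g u.1 = (‖ι ((T ^ ((N - 1) * (k + 1))) x) u.1‖₊ : ℝ≥0∞) := by
        intro u
        have hu : par u.1 = some w := u.2
        rw [hP] at hu
        have hu := Option.some.inj hu
        have hGu : G u.1 = ((k + 1 : ℕ) : ℤ) := by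
          have := hG u.1 1
          rw [Function.iterate_one, hu, hGw] at this; push_cast at *; omega
        simp only [g]
        rw [if_pos ⟨k + 1, by rw [Function.iterate_succ_apply, hu, hk]⟩, hGu, Int.toNat_natCast]
      simp_rw [hgw, hgu]
      have h1 : (T ^ ((N - 1) * k)) x = T ((T ^ ((N - 1) * (k + 1))) x) := by
        rw [← mul_apply_eq_comp, ← pow_succ']
        rw [show (N - 1) * (k + 1) + 1 = (N - 1) * k + N by
          rw [Nat.mul_succ]; omega]
        rw [pow_add, mul_apply_eq_comp, hx]
      rw [h1]
      have h2 := hT ((T ^ ((N - 1) * (k + 1))) x) w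
      simp only [one_mul] at h2
      exact hasSum_nnnorm_le h2
    · simp only [g]
      rw [if_neg hw]; exact bot_le
  have hac : ∀ n : ℕ, 0 < n → parIter par n v ≠ some v := hTree.acyclic v
  have hu := cp_upper hp (nw_ne_zero hμ) nw_ne_top g hg v hac
  have hfin : (∑' u, if u = v then 0 else (g u * nw μ u) ^ p) ≠ ⊤ := by
    refine ne_top_of_le_ne_top (b := ∑ j ∈ Finset.range N, (‖(T ^ j) x‖₊ : ℝ≥0∞) ^ p) ?_ ?_
    · exact ENNReal.sum_ne_top.2 fun j _ => ENNReal.rpow_ne_top_of_nonneg hp0.le (by simp)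
    · simp_rw [enorm_pow hX hp]
      rw [← Summable.tsum_finsetSum (fun _ _ => ENNReal.summable)]
      refine ENNReal.tsum_le_tsum fun u => ?_
      split_ifs with h
      · exact bot_le
      simp only [g]
      split_ifs with hk
      · set i := (N - 1) * (G u).toNat
        have h3 : (T ^ i) x = (T ^ (i % N)) x := by
          conv_lhs => rw [← Nat.mod_add_div i N, pow_add, mul_apply_eq_comp, pow_mul_fix hx]
        rw [h3]
        exact Finset.single_le_sum (f := fun j => ((‖ι ((T ^ j) x) u‖₊ : ℝ≥0∞) * nw μ u) ^ p)
          (fun _ _ => bot_le) (Finset.mem_range.2 (Nat.mod_lt i hN))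
      · simp [hp0]
  rw [hgv] at hu
  rw [lt_top_iff_ne_top]
  intro htop
  rw [htop, ENNReal.top_mul (by simpa using hxv)] at hu
  exact ENNReal.rpow_ne_top_of_nonneg (by positivity) hfin (top_le_iff.1 hu)

lemma fwd2_aux (hP : ∀ u, par u = some (P u)) (hTree : IsDirectedTree par)
    (hX : IsLpSpaceRep ι μ p) (hμ : ∀ v, μ v ≠ 0)
    (hp : 1 < p) (hT : IsShiftRep par (fun _ : V => (1 : 𝕜)) ι T) (v : V) (x : X)
    {N : ℕ} (hN : 1 ≤ N) (hx : (T ^ N) x = x) (w : V) :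
    (‖ι x w‖₊ : ℝ≥0∞) ≤ ∑' u : ↥(childrenMinus par v N w), (‖ι x u.1‖₊ : ℝ≥0∞) := by
  by_cases h : ∃ n, P^[n * N] v = w
  · obtain ⟨n, rfl⟩ := h
    rw [cm_spine_tsum hP hTree hN n (fun u => (‖ι x u‖₊ : ℝ≥0∞))]
    set w := P^[n * N] v with hw
    set a := P^[(n + 1) * N] v with ha
    have h1 := Tn_coord hP hX hμ hp hT N x a
    have hwa : P^[N] w = a := iter_add_N P N n v
    rw [hx] at h1
    have h2 := h1.sub (hasSum_pi_single w (ι x w))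
    have h3 := hasSum_nnnorm_le h2
    have h4 : ∀ u, ((‖(if P^[N] u = a then ι x u else 0) - (Pi.single w (ι x w) : V → 𝕜) u‖₊ : ℝ≥0∞))
        = if P^[N] u = a ∧ u ≠ w then (‖ι x u‖₊ : ℝ≥0∞) else 0 := by
      intro u
      by_cases hu : u = w
      · subst hu; simp [hwa]
      · by_cases h5 : P^[N] u = a <;> simp [hu, h5]
    simp_rw [h4] at h3
    calc (‖ι x w‖₊ : ℝ≥0∞) = (‖ι x a - (ι x a - ι x w)‖₊ : ℝ≥0∞) := by rw [sub_sub_cancel]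
      _ ≤ (‖ι x a‖₊ : ℝ≥0∞) + (‖ι x a - ι x w‖₊ : ℝ≥0∞) := by
        exact_mod_cast nnnorm_sub_le _ _
      _ ≤ _ := by gcongr
  · push Not at h
    rw [cm_nonspine_tsum hP h (fun u => (‖ι x u‖₊ : ℝ≥0∞))]
    have h1 := Tn_coord hP hX hμ hp hT N x w
    rw [hx] at h1
    refine (hasSum_nnnorm_le h1).trans (le_of_eq (tsum_congr fun u => ?_))
    split_ifs <;> simp

lemma acyc_of_none {q : V → Option V} {v : V} (h : q v = none) :
    ∀ n : ℕ, 0 < n → parIter q n v ≠ some v := by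
  intro n hn
  obtain ⟨k, rfl⟩ := Nat.exists_eq_succ_of_ne_zero hn.ne'
  simp [parIter, h]

lemma fwd2 (hP : ∀ u, par u = some (P u)) (hTree : IsDirectedTree par)
    (hX : IsLpSpaceRep ι μ p) (hμ : ∀ v, μ v ≠ 0)
    (hp : 1 < p) (hT : IsShiftRep par (fun _ : V => (1 : 𝕜)) ι T)
    (he : ∀ u, ι (e u) = Pi.single u 1) (v : V) (x : X)
    {N : ℕ} (hN : 1 ≤ N) (hx : (T ^ N) x = x) :
    cpC (childrenMinus par v N) (nw μ) p v * (‖ι x v‖₊ : ℝ≥0∞) ≤ (‖x - e v‖₊ : ℝ≥0∞) := by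
  have hp0 : 0 < p := by linarith
  obtain ⟨q, hq, hqv, -⟩ := exists_q hP hTree v hN
  have h := fwd2_aux hP hTree hX hμ hp hT v x hN hx
  rw [hq] at h ⊢
  refine (cp_upper hp (nw_ne_zero hμ) nw_ne_top (fun u => (‖ι x u‖₊ : ℝ≥0∞)) h v
    (acyc_of_none hqv)).trans ?_
  rw [one_div, ENNReal.rpow_inv_le_iff hp0, enorm_pow hX hp]
  refine ENNReal.tsum_le_tsum fun u => ?_
  split_ifs with hu
  · exact bot_le
  · simp [he, hu]

lemma forward (hP : ∀ u, par u = some (P u)) (hTree : IsDirectedTree par)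
    (hX : IsLpSpaceRep ι μ p) (hμ : ∀ v, μ v ≠ 0)
    (hp : 1 < p) (hT : IsShiftRep par (fun _ : V => (1 : 𝕜)) ι T)
    (hd : Dense {x : X | IsPeriodicPoint T x}) (v : V) :
    cpC (children par) (nw μ) p v < ⊤ ∧
        ∀ ε : ℝ, 0 < ε → ∃ N : ℕ, 1 ≤ N ∧
          cpC (childrenMinus par v N) (nw μ) p v < ENNReal.ofReal ε := by
  obtain ⟨e, he, -⟩ := exists_basis hX hp
  have key : ∀ δ : ℝ, 0 < δ → ∃ (x : X) (N : ℕ), 1 ≤ N ∧ (T ^ N) x = x ∧ ‖x - e v‖ < δ ∧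
      1 / 2 ≤ ‖ι x v‖ := by
    intro δ hδ
    have hμv : 0 < ‖μ v‖ := norm_pos_iff.2 (hμ v)
    obtain ⟨x, hx', ⟨N, hN, hx⟩⟩ := Metric.dense_iff.1 hd (e v) (min δ (‖μ v‖ / 2)) (by positivity)
    rw [mem_ball_iff_norm] at hx'
    refine ⟨x, N, hN, hx, hx'.trans_le (min_le_left _ _), ?_⟩
    have h1 := coord_le hX hp (x - e v) v
    have h2 := hx'.trans_le (min_le_right _ _)
    rw [map_sub, Pi.sub_apply, he, Pi.single_eq_same] at h1
    have h3 : ‖ι x v - 1‖ ≤ 1 / 2 := by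
      by_contra h
      push Not at h
      nlinarith
    have h4 := norm_sub_norm_le (1 : 𝕜) (1 - ι x v)
    rw [sub_sub_cancel, norm_one, norm_sub_rev] at h4
    linarith
  constructor
  · obtain ⟨x, N, hN, hx, -, h2⟩ := key 1 one_pos
    refine fwd1 hP hTree hX hμ hp hT v x ?_ hN hx
    intro h; rw [h] at h2; norm_num at h2
  · intro ε hε
    obtain ⟨x, N, hN, hx, h1, h2⟩ := key (ε / 2) (by positivity)
    refine ⟨N, hN, ?_⟩
    have h3 := fwd2 hP hTree hX hμ hp hT he v x hN hx
    have h4 : ENNReal.ofReal (1 / 2) ≤ (‖ι x v‖₊ : ℝ≥0∞) := by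
      rw [show ((‖ι x v‖₊ : ℝ≥0∞)) = ‖ι x v‖ₑ from rfl, ← ofReal_norm]
      exact ENNReal.ofReal_le_ofReal h2
    have h5 : (‖x - e v‖₊ : ℝ≥0∞) < ENNReal.ofReal (ε / 2) := by
      rw [show ((‖x - e v‖₊ : ℝ≥0∞)) = ‖x - e v‖ₑ from rfl, ← ofReal_norm]
      exact (ENNReal.ofReal_lt_ofReal_iff (by positivity)).2 h1
    have h6 : cpC (childrenMinus par v N) (nw μ) p v * ENNReal.ofReal (1 / 2) <
        ENNReal.ofReal ε * ENNReal.ofReal (1 / 2) := by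
      rw [← ENNReal.ofReal_mul hε.le, mul_one_div]
      refine lt_of_le_of_lt ?_ h5
      refine le_trans ?_ h3
      gcongr
    exact lt_of_mul_lt_mul_right' h6

end forward

section backward
variable {𝕜 : Type*} [RCLike 𝕜] {V : Type*} {X : Type*} [NormedAddCommGroup X] [NormedSpace 𝕜 X]
  {ι : X →ₗ[𝕜] V → 𝕜} {μ : V → 𝕜} {p : ℝ} {par : V → Option V} {P : V → V} {T : X →L[𝕜] X}
  {e : V → X}

lemma hasSum_toReal {α : Type*} {F : α → ℝ≥0∞} (h : ∑' u, F u ≠ ⊤) :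
    HasSum (fun u => (((F u).toReal : ℝ) : 𝕜)) (((∑' u, F u).toReal : ℝ) : 𝕜) := by
  have h1 := ENNReal.hasSum_toReal h
  rw [← ENNReal.tsum_toReal_eq (fun a => ENNReal.ne_top_of_tsum_ne_top h a)] at h1
  exact (RCLike.ofRealCLM (K := 𝕜)).hasSum h1

lemma exists_proj (hP : ∀ u, par u = some (P u)) (hX : IsLpSpaceRep ι μ p) (hμ : ∀ v, μ v ≠ 0)
    (hp : 1 < p) (hT : IsShiftRep par (fun _ : V => (1 : 𝕜)) ι T)
    {G : V → ℤ} (hG : ∀ u (n : ℕ), G (P^[n] u) = G u - n) (n : ℕ) (x : X) :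
    ∃ y : X, (∀ u, ι y u = if (n : ℤ) ∣ G u then ι x u else 0) ∧
      ∀ w, ι ((T ^ n) y) w = if (n : ℤ) ∣ G w then ι ((T ^ n) x) w else 0 := by
  have hp0 : 0 < p := by linarith
  obtain ⟨y, hy⟩ := exists_rep hX (fun u => if (n : ℤ) ∣ G u then ι x u else 0) (by
    refine ne_top_of_le_ne_top (b := (‖x‖₊ : ℝ≥0∞) ^ p)
      (ENNReal.rpow_ne_top_of_nonneg hp0.le (by simp)) ?_
    rw [enorm_pow hX hp]
    refine ENNReal.tsum_le_tsum fun u => ?_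
    split_ifs
    · exact le_rfl
    · simp [hp0])
  refine ⟨y, fun u => by rw [hy], fun w => ?_⟩
  have h1 := Tn_coord hP hX hμ hp hT n y w
  have h2 := Tn_coord hP hX hμ hp hT n x w
  refine h1.unique ?_
  have h3 : ∀ u, P^[n] u = w → ((n : ℤ) ∣ G u ↔ (n : ℤ) ∣ G w) := by
    rintro u rfl
    rw [hG]
    exact (dvd_sub_self_right).symm
  split_ifs with hw
  · convert h2 using 2 with u
    split_ifs with hu
    · rw [hy]; simp only; rw [if_pos ((h3 u hu).2 hw)]
    · rfl
  · convert hasSum_zero with u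
    split_ifs with hu
    · rw [hy]; simp only; rw [if_neg (fun h => hw ((h3 u hu).1 h))]
    · rfl

lemma cm_hsum (hP : ∀ u, par u = some (P u)) (hTree : IsDirectedTree par)
    (hX : IsLpSpaceRep ι μ p) (hμ : ∀ v, μ v ≠ 0)
    (hp : 1 < p) (hT : IsShiftRep par (fun _ : V => (1 : 𝕜)) ι T) (v : V) {N : ℕ} (hN : 1 ≤ N)
    (w : V) : ∑' u : ↥(childrenMinus par v N w), nw μ u.1 ^ (-conjExp p) ≠ ⊤ := by
  have hq := (conjExp_holder hp).symm.pos
  by_cases h : ∃ n, P^[n * N] v = w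
  · obtain ⟨n, rfl⟩ := h
    rw [cm_spine_tsum hP hTree hN n (fun u => nw μ u ^ (-conjExp p))]
    refine ENNReal.add_ne_top.2 ⟨?_, ?_⟩
    · rw [ENNReal.rpow_neg]
      refine ENNReal.inv_ne_top.2 ?_
      rw [Ne, ENNReal.rpow_eq_zero_iff_of_pos hq]
      exact nw_ne_zero hμ _
    · refine ne_top_of_le_ne_top (fiber_sum hP hX hμ hp hT N (P^[(n + 1) * N] v)) ?_
      rw [tsum_subtype _ (fun u => nw μ u ^ (-conjExp p))]
      refine ENNReal.tsum_le_tsum fun u => ?_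
      split_ifs with hu
      · rw [Set.indicator_of_mem]; exact hu.1
      · exact bot_le
  · push Not at h
    rw [cm_nonspine hP h]
    exact fiber_sum hP hX hμ hp hT N w

lemma bwdA_aux (hP : ∀ u, par u = some (P u)) (hTree : IsDirectedTree par)
    (hLeafless : Leafless par)
    (hX : IsLpSpaceRep ι μ p) (hμ : ∀ v, μ v ≠ 0)
    (hp : 1 < p) (hT : IsShiftRep par (fun _ : V => (1 : 𝕜)) ι T)
    (he : ∀ u, ι (e u) = Pi.single u 1) (v : V) {N : ℕ} (hN : 1 ≤ N)
    (hc : cpC (childrenMinus par v N) (nw μ) p v ≠ ⊤) :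
    ∃ x : X, (T ^ N) x = x - e v ∧ ι x v = 1 ∧
      (∑' u, if u = v then 0 else ((‖ι x u‖₊ : ℝ≥0∞) * nw μ u) ^ p) ≤
        cpC (childrenMinus par v N) (nw μ) p v ^ p := by
  have hp0 : 0 < p := by linarith
  obtain ⟨q, hq, hqv, hqN⟩ := exists_q hP hTree v hN
  have hne := cm_nonempty hP hLeafless v N
  have hsum := cm_hsum hP hTree hX hμ hp hT v hN
  have hsp := cm_spine_tsum hP hTree (v := v) hN
  have hns := fun w => cm_nonspine_tsum hP (v := v) (N := N) (w := w)
  rw [hq] at hc hne hsum hsp hns ⊢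
  obtain ⟨h, hv1, hfin, hsupp, hflow, hen⟩ :=
    exists_flow hp (nw_ne_zero hμ) hne hsum hc (acyc_of_none hqv)
  simp only [hqv, reduceCtorEq, if_false, add_zero] at hflow
  have hN0 : ∀ u, P^[N] u = v → h u = 0 := by
    intro u hu
    by_contra h0
    obtain ⟨k, hk⟩ := hsupp u h0
    cases k with
    | zero =>
      have : u = v := by simpa [parIter] using hk
      subst this
      exact iter_P_ne hP hTree hN u hu
    | succ k => simp [parIter, hqN u hu] at hk
  let R : V → 𝕜 := fun u => (if ∃ n, P^[n * N] v = u then 1 else -1) * (((h u).toReal : ℝ) : 𝕜)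
  have hRs : ∀ n, R (P^[n * N] v) = (((h (P^[n * N] v)).toReal : ℝ) : 𝕜) := by
    intro n; simp only [R]; rw [if_pos ⟨n, rfl⟩, one_mul]
  have hRn : ∀ u, (∀ n, P^[n * N] v ≠ u) → R u = - (((h u).toReal : ℝ) : 𝕜) := by
    intro u hu
    simp only [R]; rw [if_neg (by push Not; exact hu), neg_one_mul]
  have hRnorm : ∀ u, (‖R u‖₊ : ℝ≥0∞) = h u := by
    intro u
    rw [← nnnorm_toReal (𝕜 := 𝕜) (hfin u)]
    simp only [R]
    split_ifs <;> simp
  have hRv : R v = 1 := by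
    have := hRs 0
    simp only [zero_mul, Function.iterate_zero, id] at this
    rw [this, hv1]; simp
  obtain ⟨x, hx⟩ := exists_rep hX R (by
    have h1 : ∀ u, ((‖R u‖₊ : ℝ≥0∞) * nw μ u) ^ p ≤ (Pi.single v ((h v * nw μ v) ^ p) : V → ℝ≥0∞) u +
        if u = v then 0 else (h u * nw μ u) ^ p := by
      intro u
      rw [hRnorm]
      by_cases hu : u = v
      · subst hu; simp
      · simp [hu]
    refine ne_top_of_le_ne_top ?_ (ENNReal.tsum_le_tsum h1)
    rw [ENNReal.tsum_add, tsum_pi_single]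
    refine ENNReal.add_ne_top.2 ⟨?_, ne_top_of_le_ne_top
      (ENNReal.rpow_ne_top_of_nonneg hp0.le hc) hen⟩
    exact ENNReal.rpow_ne_top_of_nonneg hp0.le (ENNReal.mul_ne_top (hfin v) (nw_ne_top v)))
  refine ⟨x, ?_, by rw [hx, hRv], ?_⟩
  · apply hX.1
    ext w
    refine (Tn_coord hP hX hμ hp hT N x w).unique ?_
    rw [map_sub, Pi.sub_apply, he, hx]
    by_cases hw : ∃ n, P^[n * N] v = w
    · obtain ⟨n, hn⟩ := hw
      cases n with
      | zero =>
        have hn : v = w := by simpa using hn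
        subst hn
        rw [hRv]
        simp only [Pi.single_eq_same, sub_self]
        convert hasSum_zero with u
        split_ifs with hu
        · simp [R, hN0 u hu]
        · rfl
      | succ n =>
        have hwv : w ≠ v := by
          rw [← hn]
          exact iter_P_ne hP hTree (Nat.mul_pos n.succ_pos hN) v
        rw [Pi.single_eq_of_ne hwv, sub_zero]
        have h1 := hsp n h
        rw [hflow, hn] at h1
        set w' := P^[n * N] v with hw'
        have hw'w : P^[N] w' = w := by rw [hw', iter_add_N, hn]
        set F : V → ℝ≥0∞ := fun u => if P^[N] u = w ∧ u ≠ w' then h u else 0 with hF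
        have hFt : ∑' u, F u ≠ ⊤ := by
          refine ne_top_of_le_ne_top (hfin w') ?_
          rw [h1]; exact le_add_self
        have h2 := (hasSum_pi_single w' (((h w').toReal : ℝ) : 𝕜)).sub (hasSum_toReal (𝕜 := 𝕜) hFt)
        have hfun : (fun u => if P^[N] u = w then R u else 0) = fun u => (Pi.single w' (((h w').toReal : ℝ) : 𝕜) : V → 𝕜) u - (((F u).toReal : ℝ) : 𝕜) := by
          ext u
          by_cases hu : u = w'
          · rw [hu]
            simp only [hw'w, if_true, Pi.single_eq_same, hF]
            rw [hw', hRs]; simp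
          · rw [Pi.single_eq_of_ne hu, zero_sub]
            by_cases hu2 : P^[N] u = w
            · rw [if_pos hu2, hRn]
              · simp [hF, hu, hu2]
              · rintro m rfl
                rw [iter_add_N, ← hn] at hu2
                have h3 := Nat.eq_of_mul_eq_mul_right hN (iter_inj hP hTree v hu2)
                have : m = n := by omega
                subst this
                exact hu rfl
            · simp [hF, hu2]
        have hval : R w = (((h w').toReal : ℝ) : 𝕜) - (((∑' u, F u).toReal : ℝ) : 𝕜) := by
          rw [← hn, hRs, h1, ENNReal.toReal_add (hfin _) hFt, hn]
          push_cast
          ring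
        rw [hfun, hval]
        exact h2
    · push Not at hw
      have hwv : w ≠ v := fun h => hw 0 (by simpa using h.symm)
      rw [Pi.single_eq_of_ne hwv, sub_zero, hRn w hw]
      have h1 := hns w hw h
      rw [hflow] at h1
      have h2 := (hasSum_toReal (𝕜 := 𝕜) (h1 ▸ hfin w)).neg
      rw [← h1] at h2
      have hfun : (fun u => if P^[N] u = w then R u else 0) = fun u => -((((if P^[N] u = w then h u else 0 : ℝ≥0∞)).toReal : ℝ) : 𝕜) := by
        ext u
        split_ifs with hu
        · rw [hRn]
          rintro n rfl
          rw [iter_add_N] at hu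
          exact hw _ hu
        · simp
      rw [hfun]
      exact h2
  · rw [hx]
    simp_rw [hRnorm]
    exact hen

lemma bwdA (hP : ∀ u, par u = some (P u)) (hTree : IsDirectedTree par)
    (hLeafless : Leafless par)
    (hX : IsLpSpaceRep ι μ p) (hμ : ∀ v, μ v ≠ 0)
    (hp : 1 < p) (hT : IsShiftRep par (fun _ : V => (1 : 𝕜)) ι T)
    (he : ∀ u, ι (e u) = Pi.single u 1) (v : V)
    (h : ∀ ε : ℝ, 0 < ε → ∃ N : ℕ, 1 ≤ N ∧
          cpC (childrenMinus par v N) (nw μ) p v < ENNReal.ofReal ε) : PA T (e v) := by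
  have hp0 : 0 < p := by linarith
  intro ε hε
  obtain ⟨N, hN, hc⟩ := h ε hε
  refine ⟨N, hN, ?_⟩
  rintro n hn ⟨M, rfl⟩
  have hM : 1 ≤ M := by
    rcases Nat.eq_zero_or_pos M with h0 | h0
    · subst h0; simp at hn
    · exact h0
  obtain ⟨x, hx, hxv, hen⟩ := bwdA_aux hP hTree hLeafless hX hμ hp hT he v hN hc.ne_top
  obtain ⟨G, hG0, hG⟩ := exists_gen hP hTree v
  have hiter : ∀ M : ℕ, (T ^ (N * M)) x = x - ∑ j ∈ Finset.range M, e (P^[N * j] v) := by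
    intro M
    induction M with
    | zero => simp
    | succ M ih =>
      rw [Nat.mul_succ, pow_add, mul_apply_eq_comp, hx, map_sub, ih, Tn_e hP hX hT he,
        Finset.sum_range_succ]
      abel
  obtain ⟨y, hy, hTy⟩ := exists_proj hP hX hμ hp hT hG (N * M) x
  have hyT : (T ^ (N * M)) y = y - e v := by
    apply hX.1
    ext w
    rw [hTy, map_sub, Pi.sub_apply, hy, he, hiter, map_sub, map_sum, Pi.sub_apply, Finset.sum_apply]
    split_ifs with hw
    · congr 1
      rw [Finset.sum_eq_single_of_mem 0 (Finset.mem_range.2 (by omega))]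
      · simp [he]
      · intro j hj hj0
        rw [he, Pi.single_eq_of_ne]
        rintro rfl
        rw [hG, hG0, zero_sub, dvd_neg] at hw
        have h1 : N * M ∣ N * j := by exact_mod_cast hw
        have h2 := Nat.dvd_of_mul_dvd_mul_left hN h1
        have h3 := Nat.le_of_dvd (by omega) h2
        rw [Finset.mem_range] at hj
        omega
    · have hwv : w ≠ v := by
        rintro rfl
        apply hw; rw [hG0]; exact dvd_zero _
      simp [hwv]
  refine ⟨y - e v, ?_, by rw [add_sub_cancel, hyT]⟩
  have hle : (‖y - e v‖₊ : ℝ≥0∞) ≤ cpC (childrenMinus par v N) (nw μ) p v := by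
    refine norm_le_of_tsum hX hp _ (le_trans (ENNReal.tsum_le_tsum fun u => ?_) hen)
    rw [map_sub, Pi.sub_apply, hy, he]
    by_cases hu : u = v
    · subst hu
      simp [hG0, hxv, hp0]
    · rw [if_neg hu, Pi.single_eq_of_ne hu, sub_zero]
      split_ifs
      · exact le_rfl
      · simp [hp0]
  have h2 := hle.trans_lt hc
  rw [show (‖y - e v‖₊ : ℝ≥0∞) = ‖y - e v‖ₑ from rfl, ← ofReal_norm,
    ENNReal.ofReal_lt_ofReal_iff hε] at h2
  exact h2

lemma bwdB (hP : ∀ u, par u = some (P u)) (hTree : IsDirectedTree par)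
    (hLeafless : Leafless par)
    (hX : IsLpSpaceRep ι μ p) (hμ : ∀ v, μ v ≠ 0)
    (hp : 1 < p) (hT : IsShiftRep par (fun _ : V => (1 : 𝕜)) ι T)
    (he : ∀ u, ι (e u) = Pi.single u 1) (v : V)
    (hc : cpC (children par) (nw μ) p v ≠ ⊤) : PB T (e v) := by
  have hp0 : 0 < p := by linarith
  obtain ⟨G, hG0, hG⟩ := exists_gen hP hTree v
  have hsum : ∀ x, ∑' u : ↥(children par x), nw μ u.1 ^ (-conjExp p) ≠ ⊤ := by
    intro x
    have h1 := fiber_sum hP hX hμ hp hT 1 x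
    have h2 : {u | P^[1] u = x} = children par x := by
      ext u; simp [children, hP]
    rwa [h2] at h1
  obtain ⟨h, hv1, hfin, hsupp, hflow, hen⟩ :=
    exists_flow hp (nw_ne_zero hμ) hLeafless hsum hc (hTree.acyclic v)
  set a : V → ℝ≥0∞ := fun u => if u = v then 0 else (h u * nw μ u) ^ p with ha
  have hat : ∑' u, a u ≠ ⊤ := ne_top_of_le_ne_top (ENNReal.rpow_ne_top_of_nonneg hp0.le hc) hen
  obtain ⟨g, hg⟩ := exists_rep hX (fun u => (((h u).toReal : ℝ) : 𝕜)) (by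
    have h1 : ∀ u, ((‖(((h u).toReal : ℝ) : 𝕜)‖₊ : ℝ≥0∞) * nw μ u) ^ p ≤
        (Pi.single v ((h v * nw μ v) ^ p) : V → ℝ≥0∞) u + a u := by
      intro u
      rw [nnnorm_toReal (hfin u)]
      by_cases hu : u = v
      · subst hu; simp
      · simp [hu, ha]
    refine ne_top_of_le_ne_top ?_ (ENNReal.tsum_le_tsum h1)
    rw [ENNReal.tsum_add, tsum_pi_single]
    refine ENNReal.add_ne_top.2 ⟨?_, hat⟩
    exact ENNReal.rpow_ne_top_of_nonneg hp0.le (ENNReal.mul_ne_top (hfin v) (nw_ne_top v)))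
  have hTg : T g = g + e (P v) := by
    apply hX.1
    ext w
    have h1 := hT g w
    simp only [one_mul, hg] at h1
    have hft : ∑' u : ↥(children par w), h u.1 ≠ ⊤ := by
      rw [hflow]
      refine ENNReal.add_ne_top.2 ⟨hfin w, ?_⟩
      split_ifs <;> simp
    have h2 := h1.unique (hasSum_toReal hft)
    rw [h2, hflow, map_add, Pi.add_apply, he, hg, hP, ENNReal.toReal_add (hfin w)
      (by split_ifs <;> simp), Pi.single_apply]
    simp only [Option.some.injEq]
    by_cases hw : w = P v
    · simp [hw]
    · simp [hw, Ne.symm hw]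
  have hiter : ∀ n : ℕ, (T ^ n) g = g + ∑ j ∈ Finset.range n, e (P^[j + 1] v) := by
    intro n
    induction n with
    | zero => simp
    | succ n ih =>
      rw [pow_succ, mul_apply_eq_comp, hTg, map_add, ih, Tn_e hP hX hT he,
        Finset.sum_range_succ, Function.iterate_succ_apply, add_assoc]
  intro ε hε
  have hεp : 0 < ENNReal.ofReal ε ^ p := ENNReal.rpow_pos (by simpa using hε) (by simp)
  obtain ⟨F, hF⟩ := ((ENNReal.tendsto_tsum_compl_atTop_zero hat).eventually_lt_const hεp).exists
  refine ⟨F.sup (fun u => (G u).toNat) + 1, fun n hn => ?_⟩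
  obtain ⟨y, hy, hTy⟩ := exists_proj hP hX hμ hp hT hG n g
  have hyT : (T ^ n) y = y + e (P^[n] v) := by
    apply hX.1
    ext w
    rw [hTy, map_add, Pi.add_apply, hy, he, hiter, map_add, map_sum, Pi.add_apply, Finset.sum_apply]
    split_ifs with hw
    · congr 1
      rw [Finset.sum_eq_single_of_mem (n - 1) (by simp; omega)]
      · rw [he, Nat.sub_add_cancel (by omega)]
      · intro j hj hj0
        rw [he, Pi.single_eq_of_ne]
        rintro rfl
        rw [hG, hG0, zero_sub, dvd_neg] at hw
        have h1 : n ∣ j + 1 := by exact_mod_cast hw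
        have h3 := Nat.le_of_dvd (by omega) h1
        rw [Finset.mem_range] at hj
        omega
    · have hwv : w ≠ P^[n] v := by
        rintro rfl
        apply hw; rw [hG, hG0, zero_sub, dvd_neg]
      simp [hwv]
  refine ⟨y - e v, ?_, by rw [map_sub, hyT, Tn_e hP hX hT he]; abel⟩
  have hle : (‖y - e v‖₊ : ℝ≥0∞) ^ p < ENNReal.ofReal ε ^ p := by
    refine lt_of_le_of_lt ?_ hF
    rw [enorm_pow hX hp]
    have h3 := tsum_subtype {u | u ∉ F} a
    refine le_trans (ENNReal.tsum_le_tsum fun u => ?_) (le_of_eq h3.symm)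
    rw [map_sub, Pi.sub_apply, hy, he]
    by_cases hu : u = v
    · subst hu
      simp [hG0, hg, hv1, hp0]
    · rw [Pi.single_eq_of_ne hu, sub_zero]
      split_ifs with hd
      · by_cases h0 : h u = 0
        · simp [hg, h0, hp0]
        · rw [Set.indicator_of_mem]
          · rw [hg]
            simp only [ha]
            rw [nnnorm_toReal (hfin u), if_neg hu]
          · intro huF
            obtain ⟨k, hk⟩ := hsupp u h0
            rw [parIter_some hP] at hk
            have hk := Option.some.inj hk
            have hGu : G u = k := by have := hG u k; rw [hk, hG0] at this; omega
            have hk0 : k ≠ 0 := by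
              rintro rfl
              exact hu hk
            have h5 := Finset.le_sup (f := fun u => (G u).toNat) huF
            simp only [hGu, Int.toNat_natCast] at h5
            rw [hGu] at hd
            have h6 : n ∣ k := by exact_mod_cast hd
            have h7 := Nat.le_of_dvd (by omega) h6
            omega
      · simp [hp0]
  have h2 := (ENNReal.rpow_lt_rpow_iff hp0).1 hle
  rw [show (‖y - e v‖₊ : ℝ≥0∞) = ‖y - e v‖ₑ from rfl, ← ofReal_norm,
    ENNReal.ofReal_lt_ofReal_iff hε] at h2
  exact h2

end backward

/-- Theorem 8.1 / `t-charpmubil`: on a leafless unrooted tree, the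
unweighted backward shift, as an operator on `ℓ^p(V,μ)` (`1 < p < ∞`), is chaotic iff for
every vertex `v` the constant `c_p(V(v),μ)` is finite and `c_p(V_-^N(v),μ)` becomes
arbitrarily small for suitable `N ≥ 1`. -/
theorem statement13
    {𝕜 : Type*} [RCLike 𝕜] {V : Type*} (par : V → Option V) (hTree : IsDirectedTree par)
    (hUnrooted : Unrooted par) (hLeafless : Leafless par)
    (μ : V → 𝕜) (hμ : ∀ v : V, μ v ≠ 0) (p : ℝ) (hp : 1 < p)
    {X : Type*} [NormedAddCommGroup X] [NormedSpace 𝕜 X] [CompleteSpace X]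
    (ι : X →ₗ[𝕜] V → 𝕜) (hX : IsLpSpaceRep ι μ p)
    (T : X →L[𝕜] X) (hT : IsShiftRep par (fun _ : V => (1 : 𝕜)) ι T) :
    ChaoticOp T ↔
      ∀ v : V, cpC (children par) (nw μ) p v < ⊤ ∧
        ∀ ε : ℝ, 0 < ε → ∃ N : ℕ, 1 ≤ N ∧
          cpC (childrenMinus par v N) (nw μ) p v < ENNReal.ofReal ε := by
  have hex : ∀ u, ∃ w, par u = some w := fun u => Option.ne_none_iff_exists'.1 (hUnrooted u)
  choose P hP using hex
  constructor
  · intro h v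
    exact forward hP hTree hX hμ hp hT h.2 v
  · intro h
    obtain ⟨e, he, hs⟩ := exists_basis hX hp
    have := hTree.countable
    refine chaotic_of T (Set.range e) (Set.countable_range e) ?_ ?_ ?_
    · intro x
      refine mem_closure_of_tendsto (hs x) (Eventually.of_forall fun F => ?_)
      exact Submodule.sum_mem _ fun u _ =>
        Submodule.smul_mem _ _ (Submodule.subset_span ⟨u, rfl⟩)
    · rintro _ ⟨v, rfl⟩
      exact bwdA hP hTree hLeafless hX hμ hp hT he v (h v).2
    · rintro _ ⟨v, rfl⟩
      exact bwdB hP hTree hLeafless hX hμ hp hT he v (h v).1.ne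
end PaperTree
end

section
/- Let V be a leafless unrooted directed tree and μ=(μ_v)_{v∈V} a weight of nonzero scalars. Suppose the unweighted backward shift B is an operator on ℓ^1(V,μ). Then B is chaotic on ℓ^1(V,μ) if and only if for every v∈V: (1) there exists a branch (v,v_1,v_2,…) starting from v such that ∑_{n=1}^∞|μ_{v_n}|<∞; and (2) for every ε>0 there is some N≥1 such that either ∑_{n=1}^∞|μ_{par^{nN}(v)}|<ε, or there is a branch (v_0,v_1,v_2,…) starting from v_0:=par^N(v), with v_N≠v, such that ∑_{n=1}^∞|μ_{v_{nN}}|<ε. -/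
open scoped ENNReal NNReal Topology Classical
open Filter

namespace PaperTree

/-! ### Directed trees -/

variable {V : Type*}

section Comb

theorem tsum_atMostOne (P : ℕ → Prop) [DecidablePred P] (c : ℝ≥0∞) (hP : ∀ i j, P i → P j → i = j) :
    ∑' k, (if P k then c else 0) ≤ c := by
  by_cases h : ∃ k, P k
  · obtain ⟨k, hk⟩ := h
    have : ∀ j, (if P j then c else 0) = if j = k then c else 0 := by
      intro j
      by_cases hj : j = k
      · subst hj; simp [hk]
      · rw [if_neg hj, if_neg (fun h => hj (hP _ _ h hk))]
    simp_rw [this, tsum_ite_eq]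
    exact le_rfl
  · push Not at h
    simp [h]

theorem step_lemma (P : V → Prop) [DecidablePred P] (F D : V → ℝ≥0∞) (r F0 : ℝ≥0∞) (h0 : F0 ≠ 0)
    (hF : F0 ≤ ∑' w, if P w then F w else 0) (hD : (∑' w, if P w then D w else 0) ≤ r * F0)
    (hfin : r * F0 ≠ ⊤) : ∃ w, P w ∧ F w ≠ 0 ∧ D w ≤ r * F w := by
  by_contra hcon
  push Not at hcon
  have hex : ∃ w, P w ∧ F w ≠ 0 := by
    by_contra h
    push Not at h
    apply h0
    have : (∑' w, if P w then F w else 0) = 0 := by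
      rw [ENNReal.tsum_eq_zero]
      intro w
      by_cases hw : P w
      · simp [hw, h w hw]
      · simp [hw]
    rw [this] at hF
    exact le_antisymm hF bot_le
  obtain ⟨w, hPw, hFw⟩ := hex
  have hle : ∀ w, (if P w then r * F w else 0) ≤ (if P w then D w else 0) := by
    intro w
    by_cases hw : P w
    · by_cases hz : F w = 0
      · simp [hw, hz]
      · simpa [hw] using (hcon w hw hz).le
    · simp [hw]
  have hlt : (∑' w, if P w then r * F w else 0) < ∑' w, if P w then D w else 0 := by
    refine ENNReal.tsum_lt_tsum (i := w) ?_ hle ?_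
    · exact ne_top_of_le_ne_top hfin ((ENNReal.tsum_le_tsum hle).trans hD)
    · simpa [hPw] using hcon w hPw hFw
  have heq : (∑' w, if P w then r * F w else 0) = r * ∑' w, if P w then F w else 0 := by
    rw [← ENNReal.tsum_mul_left]
    congr 1; ext w; split_ifs <;> simp
  have h1 : r * F0 ≤ r * ∑' w, if P w then F w else 0 := by gcongr
  rw [← heq] at h1
  exact absurd (hlt.trans_le hD) (not_lt.mpr h1)

noncomputable def Dm (q : V → V) (a : V → ℝ≥0∞) (u : V) : ℝ≥0∞ :=
  ∑' k : ℕ, ∑' w, if q^[k] w = u then a w else 0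

theorem Dm_rec (q : V → V) (a : V → ℝ≥0∞) (u : V) :
    Dm q a u = a u + ∑' w, if q w = u then Dm q a w else 0 := by
  unfold Dm
  rw [tsum_eq_zero_add' ENNReal.summable]
  congr 1
  · rw [tsum_eq_single u]
    · simp
    · intro w hw; simp [hw]
  · have : ∀ w, (if q w = u then ∑' k : ℕ, ∑' y, (if q^[k] y = w then a y else 0) else 0)
        = ∑' k : ℕ, ∑' y, if q w = u then (if q^[k] y = w then a y else 0) else 0 := by
      intro w; split_ifs <;> simp
    simp_rw [this]
    conv_rhs => rw [ENNReal.tsum_comm]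
    refine tsum_congr (fun k => ?_)
    conv_rhs => rw [ENNReal.tsum_comm]
    refine tsum_congr (fun y => ?_)
    symm
    rw [tsum_eq_single (q^[k] y)]
    · simp [Function.iterate_succ_apply']
    · intro w hw
      simp [hw.symm]

theorem Dm_le (q : V → V) (hq : ∀ v n, 0 < n → q^[n] v ≠ v) (a : V → ℝ≥0∞) (u : V) :
    Dm q a u ≤ ∑' w, a w := by
  unfold Dm
  rw [ENNReal.tsum_comm]
  refine ENNReal.tsum_le_tsum fun w => tsum_atMostOne _ _ ?_
  have key : ∀ i j, i < j → q^[i] w = u → q^[j] w = u → False := by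
    intro i j hij hi hj
    apply hq u (j - i) (by omega)
    rw [← hi, ← Function.iterate_add_apply, show j - i + i = j by omega, hj, hi]
  intro i j hi hj
  rcases lt_trichotomy i j with h | h | h
  · exact (key i j h hi hj).elim
  · exact h
  · exact (key j i h hj hi).elim

theorem Dm_sum_le (q : V → V) (hq : ∀ v n, 0 < n → q^[n] v ≠ v) (a : V → ℝ≥0∞) (v : V) :
    (∑' w, if q w = q v ∧ w ≠ v then Dm q a w else 0) ≤ ∑' w, if w ≠ v then a w else 0 := by
  unfold Dm
  have : ∀ w, (if q w = q v ∧ w ≠ v then ∑' k : ℕ, ∑' y, (if q^[k] y = w then a y else 0) else 0)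
        = ∑' k : ℕ, ∑' y, if q w = q v ∧ w ≠ v then (if q^[k] y = w then a y else 0) else 0 := by
      intro w; split_ifs <;> simp
  simp_rw [this]
  rw [ENNReal.tsum_comm]
  have h2 : ∀ k : ℕ, (∑' w, ∑' y, if q w = q v ∧ w ≠ v then (if q^[k] y = w then a y else 0) else 0)
      = ∑' y, if q (q^[k] y) = q v ∧ q^[k] y ≠ v then a y else 0 := by
    intro k
    rw [ENNReal.tsum_comm]
    refine tsum_congr fun y => ?_
    rw [tsum_eq_single (q^[k] y)]
    · simp
    · intro w hw
      simp [hw.symm]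
  simp_rw [h2]
  rw [ENNReal.tsum_comm]
  refine ENNReal.tsum_le_tsum fun y => ?_
  have key : ∀ i j, i < j → q (q^[i] y) = q v → q (q^[j] y) = q v → False := by
    intro i j hij hi hj
    rw [← Function.iterate_succ_apply' q] at hi hj
    apply hq (q v) (j - i) (by omega)
    conv_lhs => rw [← hi]
    rw [← Function.iterate_add_apply, show j - i + i.succ = j.succ by omega, hj]
  by_cases hy : y = v
  · subst hy
    have : ∀ k : ℕ, ¬ (q (q^[k] y) = q y ∧ q^[k] y ≠ y) := by
      rintro k ⟨h1, h2⟩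
      rcases Nat.eq_zero_or_pos k with h | h
      · subst h; simp at h2
      · exact key 0 k h rfl h1
    simp [this]
  · rw [if_pos hy]
    refine tsum_atMostOne _ _ ?_
    rintro i j ⟨hi, -⟩ ⟨hj, -⟩
    rcases lt_trichotomy i j with h | h | h
    · exact (key i j h hi hj).elim
    · exact h
    · exact (key j i h hj hi).elim

theorem greedy (q : V → V) (F m : V → ℝ≥0∞)
    (hFt : ∀ u, F u ≠ ⊤)
    (hF : ∀ u, F u ≤ ∑' w, if q w = u then F w else 0)
    (v : V) (hv : F v ≠ 0) (r : ℝ≥0∞) (hr : r ≠ ⊤)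
    (hD : Dm q (fun w => F w * m w) v ≤ r * F v) :
    ∃ g : ℕ → V, g 0 = v ∧ (∀ n, q (g (n + 1)) = g n) ∧ (∑' n, m (g n)) ≤ r := by
  let St := {s : V × ℝ≥0∞ // F s.1 ≠ 0 ∧ s.2 ≠ ⊤ ∧ Dm q (fun w => F w * m w) s.1 ≤ s.2 * F s.1}
  have hmle : ∀ s : St, m s.1.1 ≤ s.1.2 := by
    rintro ⟨⟨u, r⟩, h0, hr, hD⟩
    rw [Dm_rec] at hD
    have : F u * m u ≤ F u * r := by
      rw [mul_comm (F u) r]; exact le_self_add.trans hD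
    exact (ENNReal.mul_le_mul_iff_right h0 (hFt u)).1 this
  have hstep : ∀ s : St, ∃ t : St, q t.1.1 = s.1.1 ∧ t.1.2 + m s.1.1 = s.1.2 := by
    intro s
    have hm := hmle s
    obtain ⟨⟨u, r⟩, h0, hr, hD⟩ := s
    simp only at hm h0 hr hD ⊢
    have hD' := hD
    rw [Dm_rec] at hD'
    have hmt : m u ≠ ⊤ := ne_top_of_le_ne_top hr hm
    have hr' : r - m u ≠ ⊤ := ENNReal.sub_ne_top hr
    have h1 : (∑' w, if q w = u then Dm q (fun w => F w * m w) w else 0) ≤ (r - m u) * F u := by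
      have h2 : r * F u = F u * m u + (r - m u) * F u := by
        rw [mul_comm (F u), ← add_mul, add_tsub_cancel_of_le hm]
      rw [h2] at hD'
      exact (ENNReal.add_le_add_iff_left (ENNReal.mul_ne_top (hFt u) hmt)).1 hD'
    obtain ⟨w, hw, hw0, hwD⟩ := step_lemma (fun w => q w = u) F _ (r - m u) (F u) h0 (hF u) h1
      (ENNReal.mul_ne_top hr' (hFt u))
    exact ⟨⟨(w, r - m u), hw0, hr', hwD⟩, hw, tsub_add_cancel_of_le hm⟩
  choose nx hnx1 hnx2 using hstep
  let s0 : St := ⟨(v, r), hv, hr, hD⟩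
  let s : ℕ → St := fun n => nx^[n] s0
  have hs : ∀ n, s (n + 1) = nx (s n) := fun n => Function.iterate_succ_apply' _ _ _
  refine ⟨fun n => (s n).1.1, rfl, fun n => ?_, ?_⟩
  · simp only [hs]; exact hnx1 _
  · apply ENNReal.tsum_le_of_sum_range_le
    intro K
    have : (∑ i ∈ Finset.range K, m (s i).1.1) + (s K).1.2 = r := by
      induction K with
      | zero => simp [s, s0]
      | succ K ih =>
        rw [Finset.sum_range_succ, add_assoc, add_comm (m _), hs, hnx2, ih]
    exact le_self_add.trans this.le

/-- interpolation of an `N`-step branch -/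
theorem interp (p : V → V) (N : ℕ) (hN : 1 ≤ N) (g : ℕ → V) (hg : ∀ n, p^[N] (g (n + 1)) = g n) :
    ∃ b : ℕ → V, (∀ n, p (b (n + 1)) = b n) ∧ ∀ n, b (n * N) = g n := by
  have hgj : ∀ j n, p^[j * N] (g (n + j)) = g n := by
    intro j
    induction j with
    | zero => simp
    | succ j ih =>
      intro n
      rw [add_mul, one_mul, Function.iterate_add_apply, ← add_assoc, hg, ih]
  refine ⟨fun m => p^[m * N - m] (g m), fun n => ?_, fun n => ?_⟩
  · have h : n ≤ n * N := Nat.le_mul_of_pos_right n hN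
    simp only
    rw [← Function.iterate_succ_apply' p]
    have : ((n + 1) * N - (n + 1)).succ = (n * N - n) + N := by
      rw [add_mul]; omega
    rw [this, Function.iterate_add_apply, hg]
  · have h : n ≤ n * N := Nat.le_mul_of_pos_right n hN
    simp only
    have := hgj (n * N - n) n
    rw [show n + (n * N - n) = n * N by omega, Nat.sub_mul] at this
    exact this

end Comb
section Setup

variable {𝕜 : Type*} [RCLike 𝕜] {X : Type*} [NormedAddCommGroup X] [NormedSpace 𝕜 X]

structure SData (p : V → V) (μ : V → 𝕜) (T : X →L[𝕜] X) (e : V → X) (c : V → X →L[𝕜] 𝕜) :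
    Prop where
  cnt : Countable V
  acyc : ∀ v n, 0 < n → p^[n] v ≠ v
  mu0 : ∀ v, μ v ≠ 0
  ne : ∀ v, ‖e v‖ₑ = nw μ v
  hs : ∀ x, HasSum (fun u => c u x • e u) x
  Te : ∀ u, T (e u) = e (p u)
  ce : ∀ u v, c v (e u) = if u = v then 1 else 0
  nx : ∀ x, ‖x‖ₑ = ∑' v, ‖c v x‖ₑ * nw μ v

variable {p : V → V} {μ : V → 𝕜} {T : X →L[𝕜] X} {e : V → X} {c : V → X →L[𝕜] 𝕜}

theorem SData.Tne (S : SData p μ T e c) (n : ℕ) (u : V) : (T ^ n) (e u) = e (p^[n] u) := by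
  induction n generalizing u with
  | zero => simp
  | succ n ih => rw [pow_succ, mul_apply_eq_comp, S.Te, ih, Function.iterate_succ_apply]

theorem SData.hsT (S : SData p μ T e c) (n : ℕ) (x : X) (v : V) :
    HasSum (fun u => if p^[n] u = v then c u x else 0) (c v ((T ^ n) x)) := by
  have h := ((S.hs x).mapL (T ^ n)).mapL (c v)
  refine h.congr_fun ?_ |> fun h => h
  intro u
  simp [S.Tne, S.ce]

theorem SData.nwle (S : SData p μ T e c) (n : ℕ) (u : V) :
    nw μ (p^[n] u) ≤ ‖T ^ n‖ₑ * nw μ u := by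
  rw [← S.ne, ← S.ne, ← S.Tne]
  exact ContinuousLinearMap.le_opENorm _ _

theorem SData.periodic_pow {x : X} {N : ℕ} (h : (T ^ N) x = x) (k : ℕ) : (T ^ (k * N)) x = x := by
  induction k with
  | zero => simp
  | succ k ih => rw [add_mul, one_mul, pow_add, mul_apply_eq_comp, h, ih]

theorem SData.Fle (S : SData p μ T e c) {x : X} {N : ℕ} (h : (T ^ N) x = x) (u : V) :
    ‖c u x‖ₑ ≤ ∑' w, if p^[N] w = u then ‖c w x‖ₑ else 0 := by
  have h1 := (S.hsT N x u).tsum_eq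
  rw [h] at h1
  rw [← h1]
  refine enorm_tsum_le_tsum_enorm.trans (le_of_eq ?_)
  congr 1; ext w; split_ifs <;> simp

theorem iter_acyc (hp : ∀ v n, 0 < n → p^[n] v ≠ v) {N : ℕ} (hN : 1 ≤ N) :
    ∀ v n, 0 < n → (p^[N])^[n] v ≠ v := by
  intro v n hn
  rw [← Function.iterate_mul]
  exact hp v _ (Nat.mul_pos hN hn)

theorem SData.fwd1 (S : SData p μ T e c) (hd : Dense {x : X | IsPeriodicPoint T x}) (v : V) :
    ∃ b : ℕ → V, b 0 = v ∧ (∀ n, p (b (n + 1)) = b n) ∧ (∑' n, nw μ (b (n + 1))) < ⊤ := by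
  have hopen : IsOpen {x : X | c v x ≠ 0} := isOpen_ne.preimage (c v).continuous
  obtain ⟨x, hx0, N, hN, hx⟩ := hd.inter_open_nonempty _ hopen ⟨e v, by simp [S.ce]⟩
  have hx0' : ‖c v x‖ₑ ≠ 0 := by simpa using hx0
  have hfin : (∑' w, ‖c w x‖ₑ * nw μ w) ≠ ⊤ := by rw [← S.nx]; exact enorm_ne_top
  have hDfin : Dm p^[N] (fun w => ‖c w x‖ₑ * nw μ w) v ≠ ⊤ :=
    ne_top_of_le_ne_top hfin (Dm_le _ (iter_acyc S.acyc hN) _ _)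
  obtain ⟨g, hg0, hg, hsum⟩ := greedy p^[N] (fun w => ‖c w x‖ₑ) (nw μ) (fun u => enorm_ne_top)
    (S.Fle hx) v hx0' (Dm p^[N] (fun w => ‖c w x‖ₑ * nw μ w) v / ‖c v x‖ₑ)
    (ENNReal.div_ne_top hDfin hx0') (by rw [ENNReal.div_mul_cancel hx0' enorm_ne_top])
  obtain ⟨b, hb, hbg⟩ := interp p N hN g hg
  have hsum' : (∑' n, nw μ (g n)) < ⊤ := hsum.trans_lt (ENNReal.div_ne_top hDfin hx0').lt_top
  refine ⟨b, by simpa [hg0] using hbg 0, hb, ?_⟩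
  have hbj : ∀ j n, p^[j] (b (n + j)) = b n := by
    intro j
    induction j with
    | zero => simp
    | succ j ih => intro n; rw [Function.iterate_succ_apply, ← add_assoc, hb, ih]
  refine (ENNReal.tsum_comp_le_tsum_of_injective (add_left_injective 1) (fun n => nw μ (b n))).trans_lt ?_
  have : NeZero N := ⟨by omega⟩
  rw [← (Nat.divModEquiv N).symm.tsum_eq, ENNReal.tsum_prod']
  have hbd : ∀ (n : ℕ) (s : Fin N), nw μ (b ((Nat.divModEquiv N).symm (n, s)))
      ≤ ‖T ^ (N - s.1)‖ₑ * nw μ (g (n + 1)) := by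
    intro n s
    rw [Nat.divModEquiv_symm_apply]
    simp only
    have h1 := hbj (N - s.1) (n * N + s.1)
    rw [show n * N + s.1 + (N - s.1) = (n + 1) * N by rw [add_mul]; omega, hbg] at h1
    rw [← h1]
    exact S.nwle _ _
  calc _ ≤ ∑' n : ℕ, ∑' s : Fin N, ‖T ^ (N - s.1)‖ₑ * nw μ (g (n + 1)) :=
        ENNReal.tsum_le_tsum fun n => ENNReal.tsum_le_tsum fun s => hbd n s
    _ = (∑ s : Fin N, ‖T ^ (N - s.1)‖ₑ) * ∑' n, nw μ (g (n + 1)) := by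
        rw [← ENNReal.tsum_mul_left]
        refine tsum_congr fun n => ?_
        rw [tsum_fintype, Finset.sum_mul]
    _ < ⊤ := by
        refine ENNReal.mul_lt_top ?_ ?_
        · exact ENNReal.sum_lt_top.2 fun _ _ => enorm_lt_top
        · exact (ENNReal.tsum_comp_le_tsum_of_injective (add_left_injective 1)
            (fun n => nw μ (g n))).trans_lt hsum'

theorem SData.fwd2 (S : SData p μ T e c) (hd : Dense {x : X | IsPeriodicPoint T x}) (v : V)
    (ε : ℝ) (hε : 0 < ε) : ∃ N : ℕ, 1 ≤ N ∧
      ((∑' n : ℕ, nw μ (p^[(n + 1) * N] v)) < ENNReal.ofReal ε ∨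
        ∃ b : ℕ → V, b 0 = p^[N] v ∧ (∀ n, p (b (n + 1)) = b n) ∧ b N ≠ v ∧
          (∑' n : ℕ, nw μ (b ((n + 1) * N))) < ENNReal.ofReal ε) := by
  have hmv : 0 < ‖μ v‖ := norm_pos_iff.2 (S.mu0 v)
  set δ : ℝ := min ‖μ v‖ ε / 8 with hδ
  have hδ0 : 0 < δ := by positivity
  have hδ1 : δ ≤ ‖μ v‖ / 8 := by rw [hδ]; gcongr; exact min_le_left _ _
  have hδ2 : δ ≤ ε / 8 := by rw [hδ]; gcongr; exact min_le_right _ _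
  obtain ⟨x, hxball, N, hN, hx⟩ := hd.inter_open_nonempty _ (Metric.isOpen_ball (x := e v) (ε := δ))
    ⟨e v, Metric.mem_ball_self hδ0⟩
  rw [Metric.mem_ball, dist_eq_norm] at hxball
  have hxe : ‖x - e v‖ₑ ≤ ENNReal.ofReal δ := by
    rw [← ofReal_norm]; exact ENNReal.ofReal_le_ofReal hxball.le
  have hS := S.nx (x - e v)
  -- the coefficient at v
  have hcv : ‖c v x - 1‖ < 1 / 4 := by
    have h1 : ‖c v (x - e v)‖ₑ * nw μ v ≤ ‖x - e v‖ₑ := by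
      rw [hS]; exact ENNReal.le_tsum v
    have h2 : ‖c v x - 1‖ * ‖μ v‖ ≤ ‖x - e v‖ := by
      have h3 : ‖c v (x - e v)‖₊ * ‖μ v‖₊ ≤ ‖x - e v‖₊ := by
        have : ((‖c v (x - e v)‖₊ * ‖μ v‖₊ : ℝ≥0) : ℝ≥0∞) ≤ (‖x - e v‖₊ : ℝ≥0∞) := by
          rw [ENNReal.coe_mul]; exact h1
        exact_mod_cast this
      have h4 : c v (x - e v) = c v x - 1 := by simp [S.ce]
      rw [h4] at h3
      exact_mod_cast h3
    have h5 : ‖c v x - 1‖ * ‖μ v‖ < 1 / 4 * ‖μ v‖ := by linarith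
    exact lt_of_mul_lt_mul_right h5 hmv.le
  have hoff : (∑' w, if w ≠ v then ‖c w x‖ₑ * nw μ w else 0) ≤ ENNReal.ofReal δ := by
    refine le_trans ?_ hxe
    rw [hS]
    refine ENNReal.tsum_le_tsum fun w => ?_
    by_cases hw : w = v
    · simp [hw]
    · simp [hw, S.ce, Ne.symm hw]
  by_cases hA : ∀ n : ℕ, 1 / 2 ≤ ‖c (p^[(n + 1) * N] v) x‖
  · refine ⟨N, hN, Or.inl ?_⟩
    have hinj : Function.Injective (fun n : ℕ => p^[(n + 1) * N] v) := by
      have key : ∀ i j : ℕ, i < j → p^[(i + 1) * N] v = p^[(j + 1) * N] v → False := by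
        intro i j hij h
        apply S.acyc (p^[(i + 1) * N] v) ((j - i) * N) (Nat.mul_pos (by omega) hN)
        rw [← Function.iterate_add_apply, ← add_mul, show j - i + (i + 1) = j + 1 by omega, h]
      intro i j h
      rcases lt_trichotomy i j with h' | h' | h'
      · exact (key i j h' h).elim
      · exact h'
      · exact (key j i h' h.symm).elim
    have h1 : ∀ n : ℕ, nw μ (p^[(n + 1) * N] v) ≤
        2 * (if p^[(n + 1) * N] v ≠ v then ‖c (p^[(n + 1) * N] v) x‖ₑ * nw μ (p^[(n + 1) * N] v) else 0) := by
      intro n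
      rw [if_pos (S.acyc v _ (Nat.mul_pos (by omega) hN)), ← mul_assoc]
      have : (1 : ℝ≥0∞) ≤ 2 * ‖c (p^[(n + 1) * N] v) x‖ₑ := by
        rw [← ofReal_norm, ← ENNReal.ofReal_ofNat, ← ENNReal.ofReal_mul (by norm_num),
          ← ENNReal.ofReal_one]
        apply ENNReal.ofReal_le_ofReal
        have := hA n
        linarith
      calc _ = 1 * nw μ (p^[(n + 1) * N] v) := (one_mul _).symm
        _ ≤ _ := by gcongr
    calc _ ≤ ∑' n : ℕ, _ := ENNReal.tsum_le_tsum h1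
      _ = 2 * ∑' n : ℕ, _ := ENNReal.tsum_mul_left
      _ ≤ 2 * ENNReal.ofReal δ := by
        gcongr
        exact (ENNReal.tsum_comp_le_tsum_of_injective hinj
          (fun w => if w ≠ v then ‖c w x‖ₑ * nw μ w else 0)).trans hoff
      _ = ENNReal.ofReal (2 * δ) := by
        rw [ENNReal.ofReal_mul (by norm_num), ENNReal.ofReal_ofNat]
      _ < ENNReal.ofReal ε := (ENNReal.ofReal_lt_ofReal_iff hε).2 (by linarith)
  · push Not at hA
    obtain ⟨n, hn⟩ := hA
    set M := (n + 1) * N with hM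
    have hM1 : 1 ≤ M := Nat.mul_pos (by omega) hN
    have hxM : (T ^ M) x = x := SData.periodic_pow hx (n + 1)
    refine ⟨M, hM1, Or.inr ?_⟩
    have hacyc := iter_acyc S.acyc hM1
    -- flow out of the other vertices
    have hF0 : ENNReal.ofReal (1 / 4) ≤ ∑' w, if p^[M] w = p^[M] v ∧ w ≠ v then ‖c w x‖ₑ else 0 := by
      have h1 := (S.hsT M x (p^[M] v)).sub (hasSum_ite_eq v (c v x))
      rw [hxM] at h1
      have h2 : ENNReal.ofReal (1 / 4) ≤ ‖c (p^[M] v) x - c v x‖ₑ := by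
        rw [← ofReal_norm]
        apply ENNReal.ofReal_le_ofReal
        have h3 : ‖(1 : 𝕜)‖ ≤ ‖c v x - 1‖ + ‖c (p^[M] v) x - c v x‖ + ‖c (p^[M] v) x‖ := by
          have : (1 : 𝕜) = -(c v x - 1) - (c (p^[M] v) x - c v x) + c (p^[M] v) x := by ring
          conv_lhs => rw [this]
          refine (norm_add_le _ _).trans ?_
          gcongr
          refine (norm_sub_le _ _).trans ?_
          rw [norm_neg]
        rw [norm_one] at h3
        linarith
      refine h2.trans ?_
      rw [← h1.tsum_eq]
      refine enorm_tsum_le_tsum_enorm.trans (ENNReal.tsum_le_tsum fun w => ?_)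
      by_cases hw : w = v
      · simp [hw]
      · simp only [hw, if_false, sub_zero, ne_eq, not_false_eq_true, and_true]
        split_ifs <;> simp
    have hD := (Dm_sum_le p^[M] hacyc (fun w => ‖c w x‖ₑ * nw μ w) v).trans hoff
    have hr : ENNReal.ofReal δ = ENNReal.ofReal (4 * δ) * ENNReal.ofReal (1 / 4) := by
      rw [← ENNReal.ofReal_mul (by positivity)]; congr 1; ring
    rw [hr] at hD
    obtain ⟨w, ⟨hw1, hw2⟩, hw0, hwD⟩ := step_lemma (fun w => p^[M] w = p^[M] v ∧ w ≠ v)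
      (fun w => ‖c w x‖ₑ) _ _ _ (by simp) hF0 hD
      (ENNReal.mul_ne_top ENNReal.ofReal_ne_top ENNReal.ofReal_ne_top)
    obtain ⟨g, hg0, hg, hsum⟩ := greedy p^[M] (fun w => ‖c w x‖ₑ) (nw μ) (fun u => enorm_ne_top)
      (S.Fle hxM) w hw0 _ ENNReal.ofReal_ne_top hwD
    obtain ⟨b, hb, hbg⟩ := interp p M hM1 (fun n => Nat.casesOn n (p^[M] v) g) (by
      intro n
      cases n with
      | zero => simp [hg0, hw1]
      | succ n => simpa using hg n)
    refine ⟨b, by simpa using hbg 0, hb, ?_, ?_⟩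
    · have := hbg 1
      simp only [one_mul] at this
      rw [this]
      simpa [hg0] using hw2
    · simp_rw [hbg]
      refine lt_of_le_of_lt hsum ?_
      exact (ENNReal.ofReal_lt_ofReal_iff hε).2 (by linarith)

theorem SData.dense_of (S : SData p μ T e c) (W : Submodule 𝕜 X)
    (h : ∀ v, ∀ ε : ℝ, 0 < ε → ∃ y ∈ W, ‖y - e v‖ₑ < ENNReal.ofReal ε) : Dense (W : Set X) := by
  have he : ∀ v, e v ∈ W.topologicalClosure := by
    intro v
    rw [← SetLike.mem_coe, Submodule.topologicalClosure_coe, Metric.mem_closure_iff]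
    intro ε hε
    obtain ⟨y, hy, hye⟩ := h v ε hε
    refine ⟨y, hy, ?_⟩
    rw [← ofReal_norm, ENNReal.ofReal_lt_ofReal_iff hε] at hye
    rwa [dist_comm, dist_eq_norm]
  intro x
  rw [← Submodule.topologicalClosure_coe]
  refine (Submodule.isClosed_topologicalClosure W).mem_of_tendsto (S.hs x) (Eventually.of_forall ?_)
  intro s
  exact Submodule.sum_mem _ fun u _ => Submodule.smul_mem _ _ (he u)

def perSub (T : X →L[𝕜] X) : Submodule 𝕜 X where
  carrier := {x | IsPeriodicPoint T x}
  zero_mem' := ⟨1, le_rfl, by simp⟩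
  add_mem' := by
    rintro x y ⟨N, hN, hx⟩ ⟨M, hM, hy⟩
    refine ⟨N * M, Nat.mul_pos hN hM, ?_⟩
    rw [map_add, SData.periodic_pow hy N, mul_comm, SData.periodic_pow hx M]
  smul_mem' := by
    rintro a x ⟨N, hN, hx⟩
    exact ⟨N, hN, by rw [map_smul, hx]⟩

def nullSub (T : X →L[𝕜] X) : Submodule 𝕜 X where
  carrier := {x | Tendsto (fun n : ℕ => (T ^ n) x) atTop (𝓝 0)}
  zero_mem' := by simp
  add_mem' := by
    intro x y hx hy
    simpa using Tendsto.add hx hy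
  smul_mem' := by
    intro a x hx
    have h : Tendsto (fun n : ℕ => a • (T ^ n) x) atTop (𝓝 (a • 0)) := Tendsto.const_smul hx a
    rw [smul_zero] at h
    change Tendsto (fun n : ℕ => (T ^ n) (a • x)) atTop (𝓝 0)
    simpa only [map_smul] using h

def backSub (T : X →L[𝕜] X) : Submodule 𝕜 X where
  carrier := {y | ∃ u : ℕ → X, Tendsto u atTop (𝓝 0) ∧ ∀ n, (T ^ n) (u n) = y}
  zero_mem' := ⟨fun _ => 0, by simp, by simp⟩
  add_mem' := by
    rintro x y ⟨u, hu, hx⟩ ⟨w, hw, hy⟩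
    exact ⟨fun n => u n + w n, by simpa using hu.add hw, fun n => by rw [map_add, hx, hy]⟩
  smul_mem' := by
    rintro a x ⟨u, hu, hx⟩
    exact ⟨fun n => a • u n, by simpa using hu.const_smul a, fun n => by rw [map_smul, hx]⟩

theorem SData.separable (S : SData p μ T e c) : TopologicalSpace.SeparableSpace X := by
  have := S.cnt
  have h1 : TopologicalSpace.IsSeparable (Submodule.span 𝕜 (Set.range e) : Set X) :=
    (Set.countable_range e).isSeparable.span
  have h2 : Dense (Submodule.span 𝕜 (Set.range e) : Set X) :=
    S.dense_of _ fun v ε hε => ⟨e v, Submodule.subset_span ⟨v, rfl⟩, by simpa using hε⟩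
  rw [← TopologicalSpace.isSeparable_univ_iff, ← h2.closure_eq]
  exact h1.closure

theorem hyper_of [CompleteSpace X] [TopologicalSpace.SeparableSpace X] (T : X →L[𝕜] X)
    (h0 : Dense (nullSub T : Set X)) (hb : Dense (backSub T : Set X)) : Hypercyclic T := by
  have : SecondCountableTopology X := UniformSpace.secondCountable_of_separable X
  have hd : Dense (⋂ U : TopologicalSpace.countableBasis X, ⋃ n : ℕ, (⇑(T ^ n)) ⁻¹' U.1) := by
    refine dense_iInter_of_isOpen ?_ ?_
    · intro U
      exact isOpen_iUnion fun n =>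
        (TopologicalSpace.isOpen_of_mem_countableBasis U.2).preimage (T ^ n).continuous
    · intro U
      rw [dense_iff_inter_open]
      intro W hW hWne
      obtain ⟨x, hxW, hx⟩ := h0.inter_open_nonempty W hW hWne
      obtain ⟨y, hyU, u, hu, huy⟩ := hb.inter_open_nonempty U.1
        (TopologicalSpace.isOpen_of_mem_countableBasis U.2)
        (TopologicalSpace.nonempty_of_mem_countableBasis U.2)
      have hx' : Tendsto (fun n : ℕ => (T ^ n) x) atTop (𝓝 0) := hx
      have t1 : Tendsto (fun n => x + u n) atTop (𝓝 x) := by simpa using hu.const_add x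
      have t2 : Tendsto (fun n => (T ^ n) (x + u n)) atTop (𝓝 y) := by
        simp_rw [map_add, huy]
        simpa using hx'.add_const y
      have e1 := t1.eventually (hW.mem_nhds hxW)
      have e2 := t2.eventually
        ((TopologicalSpace.isOpen_of_mem_countableBasis U.2).mem_nhds hyU)
      obtain ⟨n, h1, h2⟩ := (e1.and e2).exists
      exact ⟨x + u n, h1, Set.mem_iUnion.2 ⟨n, h2⟩⟩
  obtain ⟨x, hx⟩ := hd.nonempty
  refine ⟨x, ?_⟩
  rw [(TopologicalSpace.isBasis_countableBasis X).dense_iff]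
  intro o ho hne
  obtain ⟨n, hn⟩ := Set.mem_iUnion.1 (Set.mem_iInter.1 hx ⟨o, ho⟩)
  exact ⟨_, hn, ⟨n, rfl⟩⟩

theorem SData.summ [CompleteSpace X] (S : SData p μ T e c) (g : ℕ → V)
    (hg : (∑' n, nw μ (g n)) ≠ ⊤) : Summable (fun n => e (g n)) :=
  Summable.of_enorm (by simpa only [S.ne] using hg)

theorem SData.enorm_le (S : SData p μ T e c) (g : ℕ → V) :
    ‖∑' n, e (g n)‖ₑ ≤ ∑' n, nw μ (g n) := by
  simpa only [S.ne] using enorm_tsum_le_tsum_enorm (f := fun n => e (g n))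

theorem SData.shift_down [CompleteSpace X] (S : SData p μ T e c) (g : ℕ → V)
    (hg : (∑' n, nw μ (g n)) ≠ ⊤) (N : ℕ) (h : ∀ n, p^[N] (g (n + 1)) = g n) :
    (T ^ N) (∑' n, e (g n)) = e (p^[N] (g 0)) + ∑' n, e (g n) := by
  have hs := S.summ g hg
  rw [(T ^ N).map_tsum hs]
  have h2 : Summable (fun n => (T ^ N) (e (g n))) := hs.mapL (T ^ N)
  rw [h2.tsum_eq_zero_add]
  simp only [S.Tne, h]

theorem SData.shift_up [CompleteSpace X] (S : SData p μ T e c) (g : ℕ → V)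
    (hg : (∑' n, nw μ (g n)) ≠ ⊤) (N : ℕ) (h : ∀ n, p^[N] (g n) = g (n + 1)) :
    e (g 0) + (T ^ N) (∑' n, e (g n)) = ∑' n, e (g n) := by
  have hs := S.summ g hg
  rw [(T ^ N).map_tsum hs, hs.tsum_eq_zero_add]
  simp only [S.Tne, h]

theorem branch_iter {b : ℕ → V} (hb : ∀ n, p (b (n + 1)) = b n) (j n : ℕ) :
    p^[j] (b (n + j)) = b n := by
  induction j generalizing n with
  | zero => simp
  | succ j ih => rw [Function.iterate_succ_apply, ← add_assoc, hb, ih]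

theorem small_branch (b : ℕ → V) (hb : (∑' n, nw μ (b (n + 1))) < ⊤) (N : ℕ) (hN : 1 ≤ N) (ε : ℝ)
    (hε : 0 < ε) : ∃ k : ℕ, 1 ≤ k ∧ (∑' n : ℕ, nw μ (b ((n + 1) * (k * N)))) < ENNReal.ofReal ε := by
  have ht := ENNReal.tendsto_sum_nat_add (fun n => nw μ (b (n + 1))) hb.ne
  obtain ⟨i, hi⟩ := (ht.eventually (gt_mem_nhds (ENNReal.ofReal_pos.2 hε))).exists
  refine ⟨i + 1, by omega, lt_of_le_of_lt ?_ hi⟩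
  have hpos : 1 ≤ (i + 1) * N := Nat.mul_pos (by omega) hN
  have hge : ∀ n, i + 1 ≤ (n + 1) * ((i + 1) * N) := by
    intro n
    calc i + 1 ≤ (i + 1) * N := Nat.le_mul_of_pos_right _ hN
      _ ≤ _ := Nat.le_mul_of_pos_left _ (by omega)
  have hinj : Function.Injective (fun n : ℕ => (n + 1) * ((i + 1) * N) - (i + 1)) := by
    intro a a' h
    have h1 := hge a
    have h2 := hge a'
    simp only at h
    have h3 : (a + 1) * ((i + 1) * N) = (a' + 1) * ((i + 1) * N) := by omega
    have := Nat.eq_of_mul_eq_mul_right hpos h3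
    omega
  refine le_trans (le_of_eq ?_) (ENNReal.tsum_comp_le_tsum_of_injective hinj
    (fun k => nw μ (b (k + i + 1))))
  refine tsum_congr fun n => ?_
  rw [show (n + 1) * ((i + 1) * N) - (i + 1) + i + 1 = (n + 1) * ((i + 1) * N) by
    have := hge n; omega]

theorem SData.bwd [CompleteSpace X] (S : SData p μ T e c)
    (H : ∀ v : V, (∃ b : ℕ → V, b 0 = v ∧ (∀ n, p (b (n + 1)) = b n) ∧
        (∑' n, nw μ (b (n + 1))) < ⊤) ∧
      ∀ ε : ℝ, 0 < ε → ∃ N : ℕ, 1 ≤ N ∧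
      ((∑' n : ℕ, nw μ (p^[(n + 1) * N] v)) < ENNReal.ofReal ε ∨
        ∃ b : ℕ → V, b 0 = p^[N] v ∧ (∀ n, p (b (n + 1)) = b n) ∧ b N ≠ v ∧
          (∑' n : ℕ, nw μ (b ((n + 1) * N))) < ENNReal.ofReal ε)) : ChaoticOp T := by
  have hsep := S.separable
  have hback : Dense (backSub T : Set X) := by
    refine S.dense_of _ fun v ε hε => ⟨e v, ?_, by simpa using hε⟩
    obtain ⟨⟨b, hb0, hb, hbs⟩, -⟩ := H v
    refine ⟨fun n => e (b n), ?_, fun n => ?_⟩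
    · have := (S.summ (fun n => b (n + 1)) hbs.ne).tendsto_atTop_zero
      exact (tendsto_add_atTop_iff_nat (f := fun n => e (b n)) 1).1 this
    · rw [S.Tne]
      have := branch_iter hb n 0
      rw [zero_add] at this
      rw [this, hb0]
  have hnull : Dense (nullSub T : Set X) := by
    refine S.dense_of _ fun v ε hε => ?_
    obtain ⟨-, h2⟩ := H v
    obtain ⟨N, hN, hA | ⟨b, hb0, hb, hbv, hbs⟩⟩ := h2 ε hε
    · refine ⟨e v, ?_, by simpa using hε⟩
      change Tendsto (fun n : ℕ => (T ^ n) (e v)) atTop (𝓝 0)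
      have hne : (∑' n : ℕ, nw μ (p^[(n + 1) * N] v)) ≠ ⊤ := (hA.trans ENNReal.ofReal_lt_top).ne
      have h1 : Tendsto (fun n : ℕ => (T ^ (n * N)) (e v)) atTop (𝓝 0) := by
        have := (S.summ (fun n => p^[(n + 1) * N] v) hne).tendsto_atTop_zero
        simp_rw [S.Tne]
        exact (tendsto_add_atTop_iff_nat (f := fun n => e (p^[n * N] v)) 1).1 this
      have h2 : Tendsto (fun n : ℕ => ‖(T ^ (n / N * N)) (e v)‖) atTop (𝓝 0) := by
        have h3 : Tendsto (fun n : ℕ => n / N) atTop atTop :=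
          Nat.tendsto_div_const_atTop (by omega)
        simpa using (h1.comp h3).norm
      set K : ℝ := ∑ s ∈ Finset.range N, ‖T ^ s‖ with hK
      refine squeeze_zero_norm (a := fun n : ℕ => K * ‖(T ^ (n / N * N)) (e v)‖) ?_
        (by simpa using h2.const_mul K)
      intro n
      have hn : T ^ n = T ^ (n % N) * T ^ (n / N * N) := by
        rw [← pow_add, mul_comm, Nat.mod_add_div]
      rw [hn, mul_apply_eq_comp]
      refine ((T ^ (n % N)).le_opNorm _).trans ?_
      gcongr
      exact Finset.single_le_sum (f := fun s => ‖T ^ s‖) (fun _ _ => norm_nonneg _)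
        (Finset.mem_range.2 (Nat.mod_lt _ hN))
    · refine ⟨e v - e (b N), ?_, ?_⟩
      · change Tendsto (fun n : ℕ => (T ^ n) (e v - e (b N))) atTop (𝓝 0)
        refine tendsto_const_nhds.congr' ?_
        filter_upwards [eventually_ge_atTop N] with n hn
        have h1 := branch_iter hb N 0
        rw [zero_add] at h1
        rw [show n = (n - N) + N by omega, pow_add, mul_apply_eq_comp, map_sub, S.Tne, S.Tne, h1,
          hb0]
        simp
      · rw [sub_sub_cancel_left, enorm_neg, S.ne]
        refine lt_of_le_of_lt ?_ hbs
        have := ENNReal.le_tsum (f := fun n : ℕ => nw μ (b ((n + 1) * N))) 0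
        simpa using this
  refine ⟨hyper_of T hnull hback, ?_⟩
  change Dense (perSub T : Set X)
  refine S.dense_of _ fun v ε hε => ?_
  obtain ⟨⟨w, hw0, hw, hws⟩, h2⟩ := H v
  obtain ⟨N, hN, hcase⟩ := h2 (ε / 2) (by linarith)
  obtain ⟨k, hk, hks⟩ := small_branch w hws N hN (ε / 2) (by linarith)
  have hM : 1 ≤ k * N := Nat.mul_pos hk hN
  have hεs : ENNReal.ofReal (ε / 2) + ENNReal.ofReal (ε / 2) = ENNReal.ofReal ε := by
    rw [← ENNReal.ofReal_add (by linarith) (by linarith)]; congr 1; ring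
  set g : ℕ → V := fun n => w ((n + 1) * (k * N)) with hg
  have hgt : (∑' n, nw μ (g n)) ≠ ⊤ := (hks.trans ENNReal.ofReal_lt_top).ne
  have hg1 : (T ^ (k * N)) (∑' n, e (g n)) = e v + ∑' n, e (g n) := by
    rw [S.shift_down g hgt (k * N)]
    · have := branch_iter hw (k * N) 0
      rw [zero_add, hw0] at this
      simp only [hg, zero_add, one_mul, this]
    · intro n
      simp only [hg]
      rw [add_mul (n + 1) 1, one_mul, branch_iter hw]
  obtain hA | ⟨b, hb0, hb, hbv, hbs⟩ := hcase
  · set f : ℕ → V := fun n => p^[(n + 1) * (k * N)] v with hf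
    have hfs : (∑' n, nw μ (f n)) < ENNReal.ofReal (ε / 2) := by
      refine lt_of_le_of_lt ?_ hA
      have hinj : Function.Injective (fun n : ℕ => (n + 1) * k - 1) := by
        intro a a' h
        have h1 : 1 ≤ (a + 1) * k := Nat.mul_pos (by omega) hk
        have h2 : 1 ≤ (a' + 1) * k := Nat.mul_pos (by omega) hk
        simp only at h
        have h3 : (a + 1) * k = (a' + 1) * k := by omega
        have := Nat.eq_of_mul_eq_mul_right hk h3
        omega
      refine le_trans (le_of_eq ?_) (ENNReal.tsum_comp_le_tsum_of_injective hinj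
        (fun j => nw μ (p^[(j + 1) * N] v)))
      refine tsum_congr fun n => ?_
      have h1 : 1 ≤ (n + 1) * k := Nat.mul_pos (by omega) hk
      simp only [hf]
      rw [show (n + 1) * k - 1 + 1 = (n + 1) * k by omega, mul_assoc]
    have hf1 := S.shift_up f (hfs.trans ENNReal.ofReal_lt_top).ne (k * N) (by
      intro n
      simp only [hf]
      rw [← Function.iterate_add_apply, add_mul (n + 1) 1, one_mul, add_comm])
    refine ⟨e v + ∑' n, e (g n) + ∑' n, e (f n), ⟨k * N, hM, ?_⟩, ?_⟩
    · rw [map_add, map_add, hg1, S.Tne]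
      have : f 0 = p^[k * N] v := by simp [hf]
      rw [this] at hf1
      conv_rhs => rw [← hf1]
      abel
    · rw [show e v + ∑' n, e (g n) + ∑' n, e (f n) - e v = ∑' n, e (g n) + ∑' n, e (f n) by abel]
      refine (enorm_add_le _ _).trans_lt ?_
      rw [← hεs]
      exact ENNReal.add_lt_add ((S.enorm_le g).trans_lt hks) ((S.enorm_le f).trans_lt hfs)
  · set f : ℕ → V := fun n => b ((n * k + 1) * N) with hf
    have hfs : (∑' n, nw μ (f n)) < ENNReal.ofReal (ε / 2) := by
      refine lt_of_le_of_lt ?_ hbs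
      have hinj : Function.Injective (fun n : ℕ => n * k) := fun a a' h =>
        Nat.eq_of_mul_eq_mul_right hk h
      exact ENNReal.tsum_comp_le_tsum_of_injective hinj (fun j => nw μ (b ((j + 1) * N)))
    have hf1 := S.shift_down f (hfs.trans ENNReal.ofReal_lt_top).ne (k * N) (by
      intro n
      simp only [hf]
      rw [show ((n + 1) * k + 1) * N = (n * k + 1) * N + k * N by ring, branch_iter hb])
    have hf0 : p^[k * N] (f 0) = p^[k * N] v := by
      have h1 := branch_iter hb N 0
      rw [zero_add] at h1
      obtain ⟨j, rfl⟩ : ∃ j, k = j + 1 := ⟨k - 1, by omega⟩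
      rw [show (j + 1) * N = j * N + N by ring, Function.iterate_add_apply,
        Function.iterate_add_apply]
      simp only [hf, zero_mul, zero_add, one_mul]
      rw [h1, hb0]
    rw [hf0] at hf1
    refine ⟨e v + ∑' n, e (g n) - ∑' n, e (f n), ⟨k * N, hM, ?_⟩, ?_⟩
    · rw [map_sub, map_add, hg1, S.Tne, hf1]
      abel
    · rw [show e v + ∑' n, e (g n) - ∑' n, e (f n) - e v = ∑' n, e (g n) - ∑' n, e (f n) by abel]
      refine enorm_sub_le.trans_lt ?_
      rw [← hεs]
      exact ENNReal.add_lt_add ((S.enorm_le g).trans_lt hks) ((S.enorm_le f).trans_lt hfs)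

end Setup
theorem exists_sdata {𝕜 : Type*} [RCLike 𝕜] {V : Type*} (par : V → Option V)
    (hTree : IsDirectedTree par) (μ : V → 𝕜) (hμ : ∀ v : V, μ v ≠ 0)
    {X : Type*} [NormedAddCommGroup X] [NormedSpace 𝕜 X] [CompleteSpace X]
    (ι : X →ₗ[𝕜] V → 𝕜) (hX : IsLpSpaceRep ι μ 1)
    (T : X →L[𝕜] X) (hT : IsShiftRep par (fun _ : V => (1 : 𝕜)) ι T)
    (p : V → V) (hp : ∀ v, par v = some (p v)) (hpi : ∀ n v, parIter par n v = some (p^[n] v)) :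
    ∃ (e : V → X) (c : V → X →L[𝕜] 𝕜), SData p μ T e c := by
  obtain ⟨hinj, hran, hnorm⟩ := hX
  have hnx : ∀ x, ‖x‖ₑ = ∑' v, ‖ι x v‖ₑ * nw μ v := by
    intro x
    have h := hnorm x
    simp only [ENNReal.rpow_one, div_one, nnnorm_mul, ENNReal.coe_mul] at h
    exact h
  have hsingle : ∀ u : V, ∃ x : X, ι x = fun v => if u = v then 1 else 0 := by
    intro u
    have : (fun v => if u = v then (1 : 𝕜) else 0) ∈ Set.range ι := by
      rw [← hran, tsum_eq_single u]
      · simp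
      · intro v hv
        simp [hv.symm]
    exact this
  choose e he using hsingle
  have hne : ∀ v, ‖e v‖ₑ = nw μ v := by
    intro v
    rw [hnx, tsum_eq_single v]
    · simp [he]
    · intro w hw
      simp [he, hw.symm]
  have hbound : ∀ v x, ‖ι x v‖ ≤ ‖μ v‖⁻¹ * ‖x‖ := by
    intro v x
    have hmv : 0 < ‖μ v‖ := norm_pos_iff.2 (hμ v)
    have h1 : ‖ι x v‖ₑ * nw μ v ≤ ‖x‖ₑ := by rw [hnx]; exact ENNReal.le_tsum v
    have h2 : ‖ι x v‖ * ‖μ v‖ ≤ ‖x‖ := by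
      have : ((‖ι x v‖₊ * ‖μ v‖₊ : ℝ≥0) : ℝ≥0∞) ≤ (‖x‖₊ : ℝ≥0∞) := by
        rw [ENNReal.coe_mul]; exact h1
      have : ‖ι x v‖₊ * ‖μ v‖₊ ≤ ‖x‖₊ := by exact_mod_cast this
      exact_mod_cast this
    rw [inv_mul_eq_div, le_div_iff₀ hmv]
    exact h2
  let c : V → X →L[𝕜] 𝕜 := fun v =>
    LinearMap.mkContinuous ((LinearMap.proj v).comp ι) (‖μ v‖⁻¹) (hbound v)
  have hc : ∀ v x, c v x = ι x v := fun v x => rfl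
  refine ⟨e, c, hTree.countable, ?_, hμ, hne, ?_, ?_, ?_, hnx⟩
  · intro v n hn h
    exact hTree.acyclic v n hn (by rw [hpi, h])
  · intro x
    have hs : Summable (fun u => c u x • e u) := by
      refine Summable.of_enorm ?_
      simp only [enorm_smul, hne, hc]
      rw [← hnx]
      exact enorm_ne_top
    have : ∑' u, c u x • e u = x := by
      apply hinj
      funext v
      rw [← hc, (c v).map_tsum hs, tsum_eq_single v]
      · simp [hc, he]
      · intro w hw
        simp [hc, he, hw]
    have h3 := hs.hasSum
    rwa [this] at h3
  · intro u
    apply hinj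
    funext v
    have h := hT (e u) v
    simp only [one_mul, he] at h
    rw [he]
    change _ = if p u = v then (1 : 𝕜) else 0
    by_cases huv : p u = v
    · have hu : u ∈ children par v := by simp [children, hp, huv]
      have h2 := hasSum_single (f := fun w : ↥(children par v) => if u = w.1 then (1 : 𝕜) else 0)
        ⟨u, hu⟩ (by
          intro w hw
          rw [if_neg]
          intro h'
          exact hw (Subtype.ext h'.symm))
      simp only [if_true] at h2
      rw [if_pos huv]
      exact h.unique h2
    · rw [if_neg huv]
      have h2 : (fun w : ↥(children par v) => if u = w.1 then (1 : 𝕜) else 0) = fun _ => 0 := by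
        funext w
        rw [if_neg]
        intro h'
        have := w.2
        rw [← h'] at this
        simp only [children, Set.mem_setOf_eq, hp, Option.some_inj] at this
        exact huv this
      rw [h2] at h
      exact h.unique hasSum_zero
  · intro u v
    rw [hc, he]

/-- Theorem 8.3 / `t-char1mubil`: on a leafless unrooted tree, the
unweighted backward shift, as an operator on `ℓ^1(V,μ)`, is chaotic iff every vertex has a
branch with summable weights, and for every `ε > 0` there is `N ≥ 1` such that either the
weights of the ancestors `par^{nN}(v)` sum to less than `ε`, or some branch from
`par^N(v)` avoiding `v` at step `N` has `∑_{n ≥ 1} |μ_{v_{nN}}| < ε`. -/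
theorem statement14
    {𝕜 : Type*} [RCLike 𝕜] {V : Type*} (par : V → Option V) (hTree : IsDirectedTree par)
    (hUnrooted : Unrooted par) (hLeafless : Leafless par)
    (μ : V → 𝕜) (hμ : ∀ v : V, μ v ≠ 0)
    {X : Type*} [NormedAddCommGroup X] [NormedSpace 𝕜 X] [CompleteSpace X]
    (ι : X →ₗ[𝕜] V → 𝕜) (hX : IsLpSpaceRep ι μ 1)
    (T : X →L[𝕜] X) (hT : IsShiftRep par (fun _ : V => (1 : 𝕜)) ι T) :
    ChaoticOp T ↔
      ∀ v : V,
        (∃ b : ℕ → V, IsBranch par v b ∧ (∑' n : ℕ, nw μ (b (n + 1))) < ⊤) ∧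
        ∀ ε : ℝ, 0 < ε → ∃ N : ℕ, 1 ≤ N ∧
          ((∑' n : ℕ, (parIter par ((n + 1) * N) v).elim 0 (nw μ)) < ENNReal.ofReal ε ∨
            ∃ v₀ : V, parIter par N v = some v₀ ∧
              ∃ b : ℕ → V, IsBranch par v₀ b ∧ b N ≠ v ∧
                (∑' n : ℕ, nw μ (b ((n + 1) * N))) < ENNReal.ofReal ε) := by
  choose p hp using fun v => Option.ne_none_iff_exists'.1 (hUnrooted v)
  have hpi : ∀ n v, parIter par n v = some (p^[n] v) := by
    intro n
    induction n with
    | zero => intro v; rfl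
    | succ n ih => intro v; simp [parIter, hp, ih]
  obtain ⟨e, c, S⟩ := exists_sdata par hTree μ hμ ι hX T hT p hp hpi
  have hbr : ∀ v b, IsBranch par v b ↔ b 0 = v ∧ ∀ n, p (b (n + 1)) = b n := by
    intro v b
    simp [IsBranch, children, hp]
  constructor
  · rintro ⟨-, hd⟩ v
    refine ⟨?_, fun ε hε => ?_⟩
    · obtain ⟨b, h0, hb, hs⟩ := S.fwd1 hd v
      exact ⟨b, (hbr _ _).2 ⟨h0, hb⟩, hs⟩
    · obtain ⟨N, hN, h | ⟨b, h0, hb, hv, hs⟩⟩ := S.fwd2 hd v ε hε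
      · refine ⟨N, hN, Or.inl ?_⟩
        simpa only [hpi, Option.elim_some] using h
      · exact ⟨N, hN, Or.inr ⟨_, hpi _ _, b, (hbr _ _).2 ⟨h0, hb⟩, hv, hs⟩⟩
  · intro H
    refine S.bwd fun v => ⟨?_, fun ε hε => ?_⟩
    · obtain ⟨⟨b, hb, hs⟩, -⟩ := H v
      obtain ⟨h0, hb⟩ := (hbr _ _).1 hb
      exact ⟨b, h0, hb, hs⟩
    · obtain ⟨N, hN, h | ⟨v₀, hv₀, b, hb, hv, hs⟩⟩ := (H v).2 ε hε
      · refine ⟨N, hN, Or.inl ?_⟩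
        simpa only [hpi, Option.elim_some] using h
      · rw [hpi, Option.some_inj] at hv₀
        obtain ⟨h0, hb⟩ := (hbr _ _).1 hb
        exact ⟨N, hN, Or.inr ⟨b, h0.trans hv₀.symm, hb, hv, hs⟩⟩
end PaperTree
end
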